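/- arXiv:1605.06696 — 4 statements merged into one kernel-verified Lean document; each statement's English description precedes it below -/
import Mathlib

section
/- Let X be an n×n matrix over a commutative ring, let A, B ⊆ {1,…,n} and let C ⊆ B. Then Σ_{C ⊆ V ⊆ B} X{A|V} = Σ_{U ⊇ A, W ⊆ C} (−1)^{|W|} X{U|B∖W}, where on the left V ranges over subsets of B containing C, and on the right U ranges over subsets of {1,…,n} containing A and W over subsets of C. -/
open Finset

/-- The minor `X(A|B)`: the determinant of the submatrix of `X` with row indices in `A` and
column indices in `B`, taken in increasing order; `0` if `|A| ≠ |B|`. -/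
def minorM {m n : ℕ} {R : Type*} [CommRing R]
    (X : Matrix (Fin m) (Fin n) R) (A : Finset (Fin m)) (B : Finset (Fin n)) : R :=
  if h : A.card = B.card then
    (Matrix.of fun i j : Fin A.card =>
      X (A.orderEmbOfFin rfl i) (B.orderEmbOfFin h.symm j)).det
  else 0

/-- The Laplace product `X{A|B} = (-1)^(ΣA+ΣB) X(A|B) X(Ã|B̃)`, where elements of
`Fin n` are counted as the numbers `1,…,n` (so `i : Fin n` counts as `i+1`). -/
def lap {n : ℕ} {R : Type*} [CommRing R]
    (X : Matrix (Fin n) (Fin n) R) (A B : Finset (Fin n)) : R :=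
  (-1 : R) ^ (∑ i ∈ A, ((i : ℕ) + 1) + ∑ j ∈ B, ((j : ℕ) + 1)) *
    (minorM X A B * minorM X Aᶜ Bᶜ)

/-- The partial order `S ≤ T` on finite subsets of a linearly ordered set:
writing `S = {s₁<⋯<s_p}` and `T = {t₁<⋯<t_q}`, it means `p ≥ q` and `s_ν ≤ t_ν` for `ν ≤ q`. -/
def domLE {α : Type*} [LinearOrder α] (S T : Finset α) : Prop :=
  T.card ≤ S.card ∧ ∀ (ν : ℕ) (hT : ν < (T.sort (· ≤ ·)).length)
    (hS : ν < (S.sort (· ≤ ·)).length),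
    (S.sort (· ≤ ·))[ν] ≤ (T.sort (· ≤ ·))[ν]

/-- A subset `S ⊆ {1,…,n}` is good if `S ≤ S̃` where `S̃` is the complement of `S`. -/
def goodSet {n : ℕ} (S : Finset (Fin n)) : Prop := domLE S Sᶜ

/-- The generic `m×n` matrix, whose entries are the indeterminates `x_{ij}`. -/
noncomputable def genX (m n : ℕ) (R : Type*) [CommRing R] :
    Matrix (Fin m) (Fin n) (MvPolynomial (Fin m × Fin n) R) :=
  Matrix.of fun i j => MvPolynomial.X (i, j)

/-!
The Laplace product `X{A|B}` is the part of the Leibniz expansion of `det X` coming from the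
permutations `σ` with `σ(A) = B`. Hence `∑ V ⊆ B, X{A|V}` and `∑ U ⊇ A, X{U|B}` both collect the
permutations with `σ(A) ⊆ B`, and so they agree; inclusion–exclusion over the elements of `C` turns
this equality, applied to the sets `B ∖ W`, into the identity with the extra condition `C ⊆ V`.

That the sign of `X{A|B}` is the right one comes down to the sign of the permutation `σ` which maps
`A` increasingly onto `B` and `Aᶜ` increasingly onto `Bᶜ`. All its inversions are between `A` and
`Aᶜ`, so they may be counted by adding up, over `i ∈ A`, the number of inversions `σ` has with `i`.
For any permutation of `{1,…,n}` this number is congruent to `i + σ(i)` modulo `2`.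
-/

theorem card_compl_eq_card_compl {α : Type*} [Fintype α] [DecidableEq α] {A B : Finset α}
    (h : #A = #B) : #Aᶜ = #Bᶜ := by
  rw [card_compl, card_compl, h]

theorem map_equiv_eq_iff {α β : Type*} (e : α ≃ β) (s : Finset α) (t : Finset β) :
    s.map e.toEmbedding = t ↔ t.map e.symm.toEmbedding = s := by
  simp only [subset_antisymm_iff, subset_map_symm, map_symm_subset, and_comm]

theorem sum_powerset_filter_superset {α G : Type*} [DecidableEq α] [AddCommGroup G]
    (B C : Finset α) (f : Finset α → G) :
    ∑ V ∈ B.powerset with C ⊆ V, f V =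
      ∑ W ∈ C.powerset, (-1 : ℤ) ^ #W • ∑ V ∈ (B \ W).powerset, f V := by
  calc ∑ V ∈ B.powerset with C ⊆ V, f V
      = ∑ V ∈ B.powerset, (∑ W ∈ (C \ V).powerset, (-1 : ℤ) ^ #W) • f V := by
        simp only [sum_powerset_neg_one_pow_card, sdiff_eq_empty_iff_subset, ite_smul, one_smul,
          zero_smul, sum_filter]
    _ = ∑ V ∈ B.powerset, ∑ W ∈ (C \ V).powerset, (-1 : ℤ) ^ #W • f V := by
        simp only [sum_smul]
    _ = ∑ W ∈ C.powerset, ∑ V ∈ (B \ W).powerset, (-1 : ℤ) ^ #W • f V :=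
        sum_comm' fun V W => by
          simp only [mem_powerset, subset_sdiff, disjoint_comm (a := W)]
          tauto
    _ = ∑ W ∈ C.powerset, (-1 : ℤ) ^ #W • ∑ V ∈ (B \ W).powerset, f V := by
        simp only [smul_sum]

theorem prod_prod_Iio_eq_prod_prod_compl {ι M : Type*} [LinearOrder ι] [Fintype ι]
    [LocallyFiniteOrderBot ι] [CommMonoid M] (f : ι → ι → M) (hf : ∀ i j, f i j = f j i)
    (A : Finset ι) (hA : ∀ i ∈ A, ∀ j ∈ A, f i j = 1) (hAc : ∀ i ∈ Aᶜ, ∀ j ∈ Aᶜ, f i j = 1) :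
    ∏ j, ∏ i ∈ Iio j, f i j = ∏ j ∈ A, ∏ i ∈ Aᶜ, f i j := by
  let g (i j : ι) : M := if i < j then f i j else 1
  have hg (i j : ι) (h : f i j = 1) : g i j = 1 := by simp only [g, h, ite_self]
  have hgA : ∀ j ∈ A, ∏ i, g i j = ∏ i ∈ Aᶜ, g i j := fun j hj => by
    rw [← prod_mul_prod_compl A, prod_eq_one fun i hi => hg i j (hA i hi j hj), one_mul]
  have hgAc : ∀ j ∈ Aᶜ, ∏ i, g i j = ∏ i ∈ A, g i j := fun j hj => by
    rw [← prod_mul_prod_compl A, prod_eq_one (s := Aᶜ) fun i hi => hg i j (hAc i hi j hj), mul_one]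
  have hg_mul : ∀ j ∈ A, ∀ i ∈ Aᶜ, g i j * g j i = f i j := fun j hj i hi => by
    obtain h | h := lt_or_gt_of_ne fun hij : i = j => mem_compl.1 hi (hij ▸ hj)
    · simp only [g, if_pos h, if_neg h.not_gt, mul_one]
    · simp only [g, if_pos h, if_neg h.not_gt, one_mul, hf i j]
  calc ∏ j, ∏ i ∈ Iio j, f i j
      = ∏ j, ∏ i, g i j := by
        refine prod_congr rfl fun j _ => ?_
        rw [← prod_filter]
        congr 1
        ext i
        simp
    _ = (∏ j ∈ A, ∏ i ∈ Aᶜ, g i j) * ∏ j ∈ Aᶜ, ∏ i ∈ A, g i j := by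
        rw [← prod_mul_prod_compl A, prod_congr rfl hgA, prod_congr rfl hgAc]
    _ = ∏ j ∈ A, ∏ i ∈ Aᶜ, g i j * g j i := by
        rw [prod_comm (s := Aᶜ)]
        simp only [prod_mul_distrib]
    _ = ∏ j ∈ A, ∏ i ∈ Aᶜ, f i j :=
        prod_congr rfl fun j hj => prod_congr rfl (hg_mul j hj)

/-- The contribution of the unordered pair `{i, j}` to the sign of `σ`: it is `-1` if `σ` inverts
the pair and `1` otherwise, in particular for `i = j`. It is written as a product of a factor for
`i < j` and one for `σ i < σ j` so that products over `i` can be taken factor by factor. -/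
def pairSign {α : Type*} [LinearOrder α] (σ : Equiv.Perm α) (i j : α) : ℤˣ :=
  (if i < j then -1 else 1) * (if σ i < σ j then -1 else 1)

theorem pairSign_comm {α : Type*} [LinearOrder α] (σ : Equiv.Perm α) (i j : α) :
    pairSign σ i j = pairSign σ j i := by
  obtain rfl | hij := eq_or_ne i j
  · rfl
  · obtain h | h := hij.lt_or_gt <;> obtain h' | h' := (σ.injective.ne hij).lt_or_gt <;>
      simp [pairSign, h, h', h.not_gt, h'.not_gt]

theorem pairSign_eq_one_of_strictMonoOn {α : Type*} [LinearOrder α] {σ : Equiv.Perm α} {s : Set α}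
    (hσ : StrictMonoOn σ s) {i j : α} (hi : i ∈ s) (hj : j ∈ s) : pairSign σ i j = 1 := by
  rw [pairSign, if_congr (hσ.lt_iff_lt hi hj) rfl rfl, Int.units_mul_self]

theorem sign_eq_prod_prod_Iio_pairSign {n : ℕ} (σ : Equiv.Perm (Fin n)) :
    Equiv.Perm.sign σ = ∏ j, ∏ i ∈ Iio j, pairSign σ i j := by
  rw [Equiv.Perm.sign_eq_prod_prod_Iio]
  refine prod_congr rfl fun j _ => prod_congr rfl fun i hi => ?_
  rw [pairSign, if_pos (mem_Iio.1 hi)]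
  split_ifs <;> simp

theorem prod_pairSign {n : ℕ} (σ : Equiv.Perm (Fin n)) (j : Fin n) :
    ∏ i, pairSign σ i j = (-1) ^ ((j : ℕ) + σ j) := by
  have prod_lt (k : Fin n) : ∏ i, (if i < k then (-1 : ℤˣ) else 1) = (-1) ^ (k : ℕ) := by
    rw [← prod_filter, prod_const, filter_gt_eq_Iio, Fin.card_Iio]
  simp only [pairSign, prod_mul_distrib]
  rw [prod_lt, Equiv.prod_comp σ fun i => if i < σ j then (-1 : ℤˣ) else 1, prod_lt, pow_add]

theorem sign_eq_neg_one_pow_sum_of_strictMonoOn {n : ℕ} (σ : Equiv.Perm (Fin n))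
    (A : Finset (Fin n)) (hA : StrictMonoOn σ A) (hAc : StrictMonoOn σ ↑Aᶜ) :
    Equiv.Perm.sign σ = (-1) ^ ∑ i ∈ A, ((i : ℕ) + σ i) := by
  have h_one : ∀ i ∈ A, ∀ j ∈ A, pairSign σ i j = 1 := fun _ hi _ hj =>
    pairSign_eq_one_of_strictMonoOn hA hi hj
  calc Equiv.Perm.sign σ
      = ∏ j ∈ A, ∏ i ∈ Aᶜ, pairSign σ i j := by
        rw [sign_eq_prod_prod_Iio_pairSign, prod_prod_Iio_eq_prod_prod_compl _ (pairSign_comm σ) A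
          h_one fun _ hi _ hj => pairSign_eq_one_of_strictMonoOn hAc hi hj]
    _ = ∏ j ∈ A, ∏ i, pairSign σ i j := prod_congr rfl fun j hj => by
        rw [← prod_mul_prod_compl A, prod_eq_one fun i hi => h_one i hi j hj, one_mul]
    _ = (-1) ^ ∑ i ∈ A, ((i : ℕ) + σ i) := by simp only [prod_pairSign, prod_pow_eq_pow_sum]

section BlockPerm

variable {α : Type*} [Fintype α] [LinearOrder α] {A B : Finset α}

/-- For `#A = #B`, the permutation that maps `A` increasingly onto `B` and `Aᶜ` increasingly onto
`Bᶜ`. Its sign is the sign in the Laplace product `X{A|B}`. -/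
def blockPerm (h : #A = #B) : Equiv.Perm α :=
  (finSumEquivOfFinset (s := A) rfl rfl).symm.trans
    (finSumEquivOfFinset h.symm (card_compl_eq_card_compl h).symm)

theorem blockPerm_orderEmbOfFin (h : #A = #B) (i : Fin #A) :
    blockPerm h (A.orderEmbOfFin rfl i) = B.orderEmbOfFin h.symm i := by
  rw [blockPerm, ← finSumEquivOfFinset_inl rfl rfl, Equiv.trans_apply, Equiv.symm_apply_apply,
    finSumEquivOfFinset_inl]

theorem blockPerm_orderEmbOfFin_compl (h : #A = #B) (i : Fin #Aᶜ) :
    blockPerm h (Aᶜ.orderEmbOfFin rfl i) =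
      Bᶜ.orderEmbOfFin (card_compl_eq_card_compl h).symm i := by
  rw [blockPerm, ← finSumEquivOfFinset_inr rfl rfl, Equiv.trans_apply, Equiv.symm_apply_apply,
    finSumEquivOfFinset_inr]

theorem strictMonoOn_blockPerm (h : #A = #B) : StrictMonoOn (blockPerm h) A := by
  rw [← range_orderEmbOfFin A rfl]
  rintro _ ⟨i, rfl⟩ _ ⟨j, rfl⟩ hij
  simpa only [blockPerm_orderEmbOfFin, OrderEmbedding.lt_iff_lt] using hij

theorem strictMonoOn_blockPerm_compl (h : #A = #B) : StrictMonoOn (blockPerm h) ↑Aᶜ := by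
  rw [← range_orderEmbOfFin Aᶜ rfl]
  rintro _ ⟨i, rfl⟩ _ ⟨j, rfl⟩ hij
  simpa only [blockPerm_orderEmbOfFin_compl, OrderEmbedding.lt_iff_lt] using hij

theorem map_blockPerm (h : #A = #B) : A.map (blockPerm h).toEmbedding = B := by
  refine eq_of_subset_of_card_le ?_ (by rw [card_map, h])
  rw [← coe_subset, coe_map, ← range_orderEmbOfFin A rfl]
  rintro _ ⟨_, ⟨i, rfl⟩, rfl⟩
  exact blockPerm_orderEmbOfFin h i ▸ orderEmbOfFin_mem B h.symm i

end BlockPerm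

theorem sign_blockPerm {n : ℕ} {A B : Finset (Fin n)} (h : #A = #B) :
    Equiv.Perm.sign (blockPerm h) = (-1) ^ (∑ i ∈ A, (i : ℕ) + ∑ j ∈ B, (j : ℕ)) := by
  have hsum : ∑ i ∈ A, (blockPerm h i : ℕ) = ∑ j ∈ B, (j : ℕ) := by
    conv_rhs => rw [← map_blockPerm h, sum_map]
    rfl
  rw [sign_eq_neg_one_pow_sum_of_strictMonoOn _ A (strictMonoOn_blockPerm h)
    (strictMonoOn_blockPerm_compl h), sum_add_distrib, hsum]

/-- The matrix `X` with its entries outside the blocks `A × B` and `Aᶜ × Bᶜ` replaced by `0`. Its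
determinant is the Laplace product `X{A|B}`. -/
def blockMask {m n R : Type*} [DecidableEq m] [DecidableEq n] [Zero R] (X : Matrix m n R)
    (A : Finset m) (B : Finset n) : Matrix m n R :=
  Matrix.of fun i j => if i ∈ A ↔ j ∈ B then X i j else 0

theorem det_blockMask {n R : Type*} [Fintype n] [DecidableEq n] [CommRing R] (X : Matrix n n R)
    (A B : Finset n) :
    (blockMask X A B).det = ∑ σ : Equiv.Perm n with A.map σ.toEmbedding = B,
      (Equiv.Perm.sign σ : ℤ) * ∏ i, X i (σ i) := by
  have map_eq_iff (σ : Equiv.Perm n) :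
      A.map σ.toEmbedding = B ↔ ∀ i, i ∈ A ↔ σ i ∈ B := by
    rw [map_equiv_eq_iff, eq_comm, Finset.ext_iff]
    simp only [mem_map_equiv, Equiv.symm_symm]
  rw [← Matrix.det_transpose, Matrix.det_apply', sum_filter]
  refine sum_congr rfl fun σ _ => ?_
  simp only [Matrix.transpose_apply, blockMask, Matrix.of_apply, prod_ite_zero, mul_ite, mul_zero,
    mem_univ, forall_true_left, map_eq_iff]

theorem blockMask_submatrix_finSumEquivOfFinset {m n R : Type*} [Fintype m] [LinearOrder m]
    [Fintype n] [LinearOrder n] [Zero R] (X : Matrix m n R) {A : Finset m} {B : Finset n}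
    {a a' b b' : ℕ} (hA : #A = a) (hAc : #Aᶜ = a') (hB : #B = b) (hBc : #Bᶜ = b') :
    (blockMask X A B).submatrix (finSumEquivOfFinset hA hAc) (finSumEquivOfFinset hB hBc) =
      Matrix.fromBlocks (X.submatrix (A.orderEmbOfFin hA) (B.orderEmbOfFin hB)) 0 0
        (X.submatrix (Aᶜ.orderEmbOfFin hAc) (Bᶜ.orderEmbOfFin hBc)) := by
  have hA_notMem (i) : Aᶜ.orderEmbOfFin hAc i ∉ A := mem_compl.1 (orderEmbOfFin_mem _ _ _)
  have hB_notMem (j) : Bᶜ.orderEmbOfFin hBc j ∉ B := mem_compl.1 (orderEmbOfFin_mem _ _ _)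
  ext (i | i) (j | j) <;> simp [blockMask, hA_notMem, hB_notMem]

section LaplaceProduct

variable {n : ℕ} {R : Type*} [CommRing R] (X : Matrix (Fin n) (Fin n) R) (A B : Finset (Fin n))

variable {A B} in
theorem lap_eq_det_blockMask (h : #A = #B) : lap X A B = (blockMask X A B).det := by
  have hc : #Aᶜ = #Bᶜ := card_compl_eq_card_compl h
  let e := finSumEquivOfFinset (s := A) rfl rfl
  let f := finSumEquivOfFinset h.symm hc.symm
  have hminors : minorM X A B * minorM X Aᶜ Bᶜ = ((blockMask X A B).submatrix e f).det := by
    rw [blockMask_submatrix_finSumEquivOfFinset, Matrix.det_fromBlocks_zero₂₁, minorM, minorM,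
      dif_pos h, dif_pos hc]
    rfl
  have hdet : ((blockMask X A B).submatrix e f).det =
      (Equiv.Perm.sign (blockPerm h) : ℤ) * (blockMask X A B).det := by
    rw [← Equiv.Perm.sign_symm]
    exact Matrix.det_reindex e.symm f.symm (blockMask X A B)
  have hexp : ∑ i ∈ A, ((i : ℕ) + 1) + ∑ j ∈ B, ((j : ℕ) + 1) =
      (∑ i ∈ A, (i : ℕ) + ∑ j ∈ B, (j : ℕ)) + 2 * #A := by
    simp only [sum_add_distrib, sum_const, smul_eq_mul, h]
    ring
  rw [lap, hminors, hdet, sign_blockPerm, hexp, pow_add, (even_two_mul _).neg_one_pow, mul_one,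
    ← mul_assoc]
  push_cast
  rw [← mul_pow, neg_one_mul, neg_neg, one_pow, one_mul]

theorem lap_eq_sum_perm :
    lap X A B = ∑ σ : Equiv.Perm (Fin n) with A.map σ.toEmbedding = B,
      (Equiv.Perm.sign σ : ℤ) * ∏ i, X i (σ i) := by
  by_cases h : #A = #B
  · rw [lap_eq_det_blockMask X h, det_blockMask]
  · rw [lap, minorM, dif_neg h, zero_mul, mul_zero, filter_false_of_mem, sum_empty]
    rintro σ - rfl
    exact h (card_map _).symm

theorem sum_powerset_lap_eq_sum_superset_lap :
    ∑ V ∈ B.powerset, lap X A V = ∑ U : Finset (Fin n) with A ⊆ U, lap X U B := by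
  let leibnizTerm (σ : Equiv.Perm (Fin n)) : R := (Equiv.Perm.sign σ : ℤ) * ∏ i, X i (σ i)
  calc ∑ V ∈ B.powerset, lap X A V
      = ∑ σ : Equiv.Perm (Fin n) with A.map σ.toEmbedding ⊆ B, leibnizTerm σ := by
        simp only [lap_eq_sum_perm, sum_fiberwise_eq_sum_filter, mem_powerset, leibnizTerm]
    _ = ∑ U : Finset (Fin n) with A ⊆ U, lap X U B := by
        simp only [lap_eq_sum_perm, map_equiv_eq_iff _ _ B, sum_fiberwise_eq_sum_filter,
          mem_filter_univ, subset_map_symm, leibnizTerm]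

end LaplaceProduct

/-- Corollary 1: for `C ⊆ B`,
`Σ_{C ⊆ V ⊆ B} X{A|V} = Σ_{U ⊇ A, W ⊆ C} (-1)^{|W|} X{U|B∖W}`. -/
theorem statement6 {n : ℕ} {R : Type*} [CommRing R] (X : Matrix (Fin n) (Fin n) R)
    (A B C : Finset (Fin n)) (hC : C ⊆ B) :
    ∑ V ∈ B.powerset.filter (fun V => C ⊆ V), lap X A V =
      ∑ U ∈ Finset.univ.filter (fun U : Finset (Fin n) => A ⊆ U),
        ∑ W ∈ C.powerset, (-1 : R) ^ W.card * lap X U (B \ W) := by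
  rw [sum_powerset_filter_superset, sum_comm]
  refine sum_congr rfl fun W _ => ?_
  rw [sum_powerset_lap_eq_sum_superset_lap, zsmul_eq_mul, mul_sum, Int.cast_pow, Int.cast_neg,
    Int.cast_one]
end

section
/- Let A, B ⊆ {1,…,n} with |A| = |B|. Then there exist a finite list of pairs (A₁,B₁),…,(A_k,B_k) of subsets of {1,…,n} and signs ε₁,…,ε_k ∈ {+1,−1} such that Aᵢ ≤ A, Bᵢ ≤ B, Aᵢ and Bᵢ are good for every i, and for every n×n matrix X over every commutative ring, X{A|B} = Σᵢ εᵢ·X{Aᵢ|Bᵢ}. -/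
open Finset

/-!
The Laplace product `X{A|B}` is the part of the Leibniz expansion of `det X` that runs over the
permutations mapping `B` onto `A`: it is the image of the indicator function of these permutations
under a linear map that depends on `X` only. (The sign `(-1)^(ΣA+ΣB)` is that of the permutation
mapping `A` increasingly onto `B` and `Aᶜ` increasingly onto `Bᶜ`.) So it is enough to straighten
indicator functions.

Suppose `A` is bad, so that for some `x` fewer elements `≤ x` lie in `A` than outside `A`. Let `A₀`
be the set of elements `≤ x` of `A`, and let `U` consist of the elements `> x` of `A` and the
elements `≤ x` outside `A`. Then `|U| > |B|`, so for every permutation `σ` some `u ∈ U` is not in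
`σ B`, and adding `u` to `T` or removing it from `T` does not affect whether `σ B ⊆ A₀ ∪ T`. Hence
`∑ (-1)^|T|` over the `T ⊆ U` with `σ B ⊆ A₀ ∪ T` vanishes, and
`∑ (-1)^|T| · 1[σ B' = A₀ ∪ T]` over all `T ⊆ U` and `B' ⊇ B` is zero. Its term with
`A₀ ∪ T = A` and `B' = B` is the indicator for `(A, B)`, up to sign, and all other nonzero terms
belong to strictly smaller pairs. Bad column sets are dealt with by `σ ↦ σ⁻¹`.
-/

open scoped Pointwise

section Domination

variable {α : Type*} [LinearOrder α]

/-- The counting function `x ↦ |{y ∈ S | y ≤ x}|` of a finite set. It turns the relation `domLE`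
into the reverse of the pointwise order on functions. -/
def countLE (S : Finset α) (x : α) : ℕ := #{y ∈ S | y ≤ x}

theorem getElem_le_iff_lt_countP {l : List α} (hl : l.Pairwise (· ≤ ·)) {ν : ℕ}
    (hν : ν < l.length) (x : α) : l[ν] ≤ x ↔ ν < l.countP (· ≤ x) := by
  induction l generalizing ν with
  | nil => simp at hν
  | cons a l ih =>
    obtain ⟨ha, hl⟩ := List.pairwise_cons.1 hl
    by_cases hax : a ≤ x
    · cases ν with
      | zero => simp [hax]
      | succ ν => simpa [hax] using ih hl (by simpa using hν)
    · have hlarge : ∀ b ∈ a :: l, ¬ b ≤ x :=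
        List.forall_mem_cons.2 ⟨hax, fun b hb hbx => hax ((ha b hb).trans hbx)⟩
      have hcount : (a :: l).countP (· ≤ x) = 0 := by
        simpa [List.countP_eq_zero] using hlarge
      simp only [hcount, Nat.not_lt_zero, iff_false]
      exact hlarge _ (List.getElem_mem hν)

theorem sort_getElem_le_iff (S : Finset α) {ν : ℕ} (hν : ν < (S.sort (· ≤ ·)).length) (x : α) :
    (S.sort (· ≤ ·))[ν] ≤ x ↔ ν < countLE S x := by
  have hcount : countLE S x = (S.sort (· ≤ ·)).countP (· ≤ x) := by
    rw [← Multiset.coe_countP, Finset.sort_eq, Multiset.countP_eq_card_filter]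
    rfl
  rw [hcount, getElem_le_iff_lt_countP (S.pairwise_sort (· ≤ ·))]

theorem countLE_le_card (S : Finset α) (x : α) : countLE S x ≤ #S := card_filter_le _ _

theorem countLE_add_card_filter_lt (S : Finset α) (x : α) :
    countLE S x + #{y ∈ S | x < y} = #S := by
  simp only [countLE, ← not_le, card_filter_add_card_filter_not]

theorem domLE_iff {S T : Finset α} : domLE S T ↔ countLE T ≤ countLE S := by
  constructor
  · rintro ⟨hcard, hle⟩ x
    by_contra! hlt
    have hT : countLE S x < (T.sort (· ≤ ·)).length := by
      simpa using hlt.trans_le (countLE_le_card T x)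
    have hS : countLE S x < (S.sort (· ≤ ·)).length := by
      simpa using (length_sort (α := α) (s := T) (· ≤ ·) ▸ hT).trans_le hcard
    have hTx := (sort_getElem_le_iff T hT x).2 hlt
    exact lt_irrefl _ ((sort_getElem_le_iff S hS x).1 ((hle _ hT hS).trans hTx))
  · intro h
    refine ⟨?_, fun ν hT hS => ?_⟩
    · rcases T.eq_empty_or_nonempty with rfl | hT
      · simp
      · have hmax : countLE T (T.max' hT) = #T := by
          rw [countLE, filter_true_of_mem fun y hy => T.le_max' y hy]
        exact hmax ▸ (h _).trans (countLE_le_card S _)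
    · exact (sort_getElem_le_iff S hS _).2
        (((sort_getElem_le_iff T hT _).1 le_rfl).trans_le (h _))

theorem domLE_refl (S : Finset α) : domLE S S := domLE_iff.2 le_rfl

theorem domLE.trans {S T U : Finset α} (hST : domLE S T) (hTU : domLE T U) : domLE S U :=
  domLE_iff.2 ((domLE_iff.1 hTU).trans (domLE_iff.1 hST))

theorem domLE.antisymm {S T : Finset α} (hST : domLE S T) (hTS : domLE T S) : S = T := by
  have hsort : S.sort (· ≤ ·) = T.sort (· ≤ ·) :=
    List.ext_getElem (by simpa using le_antisymm hTS.1 hST.1)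
      fun ν hS hT => le_antisymm (hST.2 ν hT hS) (hTS.2 ν hS hT)
  rw [← sort_toFinset S (· ≤ ·), hsort, sort_toFinset]

theorem domLE_of_superset {S T : Finset α} (h : T ⊆ S) : domLE S T :=
  domLE_iff.2 fun _ => card_le_card (filter_subset_filter _ h)

theorem domLE.countLE_lt {S T : Finset α} (h : domLE S T) (hne : S ≠ T) :
    countLE T < countLE S :=
  lt_of_le_not_ge (domLE_iff.1 h) fun hle => hne (h.antisymm (domLE_iff.2 hle))

theorem domLE_of_exchange {S T : Finset α} {x : α} (hlow : {y ∈ T | y ≤ x} ⊆ S)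
    (hhigh : {y ∈ S | x < y} ⊆ T) (hcard : #T ≤ #S) : domLE S T := by
  refine domLE_iff.2 fun z => ?_
  change countLE T z ≤ countLE S z
  rcases le_or_gt z x with hzx | hxz
  · refine card_le_card fun y hy => ?_
    obtain ⟨hyT, hyz⟩ := mem_filter.1 hy
    exact mem_filter.2 ⟨hlow (mem_filter.2 ⟨hyT, hyz.trans hzx⟩), hyz⟩
  · have habove : #{y ∈ S | z < y} ≤ #{y ∈ T | z < y} := by
      refine card_le_card fun y hy => ?_
      obtain ⟨hyS, hzy⟩ := mem_filter.1 hy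
      exact mem_filter.2 ⟨hhigh (mem_filter.2 ⟨hyS, hxz.trans hzy⟩), hzy⟩
    have hS := countLE_add_card_filter_lt S z
    have hT := countLE_add_card_filter_lt T z
    lia

end Domination

section MapIndicator

variable {α : Type*} [DecidableEq α]

theorem eq_sdiff_of_inter_union_eq {A I T : Finset α} (hT : T ⊆ symmDiff A I)
    (hA : A ∩ I ∪ T = A) : T = A \ I := by
  have hdisj : Disjoint T (A ∩ I) := disjoint_of_subset_left hT (disjoint_symmDiff_inf A I)
  rw [← sdiff_inter_self_left A I, ← union_sdiff_cancel_left hdisj.symm, hA]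

/-- The indicator function of the set of permutations that map `B` onto `A`. -/
def mapIndicator (A B : Finset α) (σ : Equiv.Perm α) : ℤ := if σ • B = A then 1 else 0

theorem mapIndicator_eq_zero {A B : Finset α} (h : #A ≠ #B) : mapIndicator A B = 0 := by
  funext σ
  exact if_neg fun hσ => h (by rw [← hσ, card_smul_finset])

theorem smul_eq_iff_forall_mem_iff {A B : Finset α} {σ : Equiv.Perm α} :
    σ • B = A ↔ ∀ i, σ i ∈ A ↔ i ∈ B := by
  rw [smul_eq_iff_eq_inv_smul, Finset.ext_iff]
  simp only [mem_inv_smul_finset_iff, Equiv.Perm.smul_def, iff_comm]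

theorem mapIndicator_inv (A B : Finset α) (σ : Equiv.Perm α) :
    mapIndicator A B σ⁻¹ = mapIndicator B A σ := by
  simp only [mapIndicator, inv_smul_eq_iff, eq_comm (a := B)]

theorem sum_superset_mapIndicator [Fintype α] (A B : Finset α) (σ : Equiv.Perm α) :
    ∑ B' with B ⊆ B', mapIndicator A B' σ = if σ • B ⊆ A then 1 else 0 := by
  simp only [mapIndicator, smul_eq_iff_eq_inv_smul, sum_ite_eq', mem_filter, mem_univ, true_and,
    smul_finset_subset_iff]

theorem sum_powerset_neg_one_pow_card_smul_eq_zero {G : Type*} [AddCommGroup G] {U : Finset α}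
    {u : α} (hu : u ∈ U) {f : Finset α → G} (hf : ∀ T, f (insert u T) = f T) :
    ∑ T ∈ U.powerset, (-1 : ℤ) ^ #T • f T = 0 := by
  rw [← insert_erase hu, sum_powerset_insert (notMem_erase u U), ← sum_add_distrib]
  refine sum_eq_zero fun T hT => ?_
  have huT : u ∉ T := fun h => notMem_erase u U (mem_powerset.1 hT h)
  rw [card_insert_of_notMem huT, hf, pow_succ, mul_neg_one, neg_smul, add_neg_cancel]

theorem sum_powerset_superset_mapIndicator_eq_zero [Fintype α] (A₀ : Finset α) {U B : Finset α}
    (hBU : #B < #U) :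
    ∑ p ∈ U.powerset ×ˢ ({B' | B ⊆ B'} : Finset (Finset α)),
      (-1 : ℤ) ^ #p.1 • mapIndicator (A₀ ∪ p.1) p.2 = 0 := by
  funext σ
  obtain ⟨u, huU, huB⟩ : ∃ u ∈ U, u ∉ σ • B :=
    exists_mem_notMem_of_card_lt_card (by rwa [card_smul_finset])
  have hinsert : ∀ T, σ • B ⊆ A₀ ∪ insert u T ↔ σ • B ⊆ A₀ ∪ T := fun T => by
    rw [union_insert, subset_insert_iff_of_notMem huB]
  simp only [sum_product, Finset.sum_apply, Pi.smul_apply, ← smul_sum, sum_superset_mapIndicator,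
    Pi.zero_apply]
  exact sum_powerset_neg_one_pow_card_smul_eq_zero huU fun T => by simp only [hinsert]

end MapIndicator

section Straightening

variable {α : Type*} [LinearOrder α] [Fintype α] {A B : Finset α}

theorem card_lt_card_symmDiff_Iic {x : α} (hx : countLE A x < countLE Aᶜ x) :
    #A < #(symmDiff A ({y | y ≤ x} : Finset α)) := by
  have hhigh : A \ ({y | y ≤ x} : Finset α) = {y ∈ A | x < y} := by ext; simp
  have hlow : ({y | y ≤ x} : Finset α) \ A = {y ∈ Aᶜ | y ≤ x} := by ext; simp [and_comm]
  have hcard : #(symmDiff A ({y | y ≤ x} : Finset α)) = #{y ∈ A | x < y} + countLE Aᶜ x := by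
    rw [symmDiff_def, sup_eq_union, card_union_of_disjoint disjoint_sdiff_sdiff, hhigh, hlow,
      countLE]
  have hA := countLE_add_card_filter_lt A x
  omega

theorem domLE_inter_union {x : α} {T : Finset α}
    (hT : T ⊆ symmDiff A ({y | y ≤ x} : Finset α))
    (hcard : #A ≤ #(A ∩ ({y | y ≤ x} : Finset α) ∪ T)) :
    domLE (A ∩ ({y | y ≤ x} : Finset α) ∪ T) A := by
  refine domLE_of_exchange (x := x) (fun y hy => ?_) (fun y hy => ?_) hcard
  · simp_all
  · obtain ⟨hy, hxy⟩ := mem_filter.1 hy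
    rcases mem_union.1 hy with hyA | hyT
    · exact (mem_inter.1 hyA).1
    · simpa [mem_symmDiff, hxy.not_ge] using hT hyT

theorem mapIndicator_mem_of_bad_left (hAB : #A = #B) (hbad : ¬ domLE A Aᶜ)
    (H : AddSubgroup (Equiv.Perm α → ℤ))
    (hH : ∀ A' B', #A' = #B' → domLE A' A → domLE B' B → A' ≠ A → mapIndicator A' B' ∈ H) :
    mapIndicator A B ∈ H := by
  obtain ⟨x, hx⟩ : ∃ x, countLE A x < countLE Aᶜ x := by
    simpa [domLE_iff, Pi.le_def] using hbad
  have hrel := sum_powerset_superset_mapIndicator_eq_zero (A ∩ ({y | y ≤ x} : Finset α))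
    (hAB ▸ card_lt_card_symmDiff_Iic hx)
  set I : Finset α := {y | y ≤ x}
  have hmem : (A \ I, B) ∈ (symmDiff A I).powerset ×ˢ ({B' | B ⊆ B'} : Finset (Finset α)) :=
    mem_product.2 ⟨mem_powerset.2 le_sup_left, by simp⟩
  rw [← add_sum_erase _ _ hmem] at hrel
  have hrest : ∀ p ∈ ((symmDiff A I).powerset ×ˢ
      ({B' | B ⊆ B'} : Finset (Finset α))).erase (A \ I, B),
      (-1 : ℤ) ^ #p.1 • mapIndicator (A ∩ I ∪ p.1) p.2 ∈ H := by
    rintro ⟨T, B'⟩ hp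
    simp only [mem_erase, mem_product, mem_powerset, mem_filter_univ, ne_eq, Prod.mk.injEq,
      not_and] at hp
    obtain ⟨hne, hT, hB'⟩ := hp
    refine H.zsmul_mem ?_ _
    by_cases hcard : #(A ∩ I ∪ T) = #B'
    · have hdom : domLE (A ∩ I ∪ T) A :=
        domLE_inter_union hT (hcard ▸ hAB ▸ card_le_card hB')
      refine hH _ _ hcard hdom (domLE_of_superset hB') fun hA => ?_
      exact hne (eq_sdiff_of_inter_union_eq hT hA)
        (eq_of_subset_of_card_le hB' (by rw [← hcard, hA, hAB])).symm
    · exact mapIndicator_eq_zero hcard ▸ H.zero_mem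
  have hmain := (H.add_mem_cancel_right (H.sum_mem hrest)).1 (hrel ▸ H.zero_mem)
  rw [union_comm, sdiff_union_inter] at hmain
  rcases neg_one_pow_eq_or ℤ #(A \ I) with h | h <;> simpa [h] using hmain

theorem mapIndicator_mem_of_bad_right (hAB : #A = #B) (hbad : ¬ domLE B Bᶜ)
    (H : AddSubgroup (Equiv.Perm α → ℤ))
    (hH : ∀ A' B', #A' = #B' → domLE A' A → domLE B' B → B' ≠ B → mapIndicator A' B' ∈ H) :
    mapIndicator A B ∈ H := by
  let invert := (LinearMap.funLeft ℤ ℤ (Inv.inv : Equiv.Perm α → Equiv.Perm α)).toAddMonoidHom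
  have hinvert : ∀ C D : Finset α, invert (mapIndicator C D) = mapIndicator D C :=
    fun C D => funext (mapIndicator_inv C D)
  rw [← hinvert, ← AddSubgroup.mem_comap]
  refine mapIndicator_mem_of_bad_left hAB.symm hbad _ fun B' A' hcard hB' hA' hne => ?_
  rw [AddSubgroup.mem_comap, hinvert]
  exact hH A' B' hcard.symm hA' hB' hne

/-- The pairs `(A', B')` of good sets with `A' ≤ A` and `B' ≤ B`. -/
def goodPairsBelow (A B : Finset α) : Set (Finset α × Finset α) :=
  {p | domLE p.1 A ∧ domLE p.2 B ∧ domLE p.1 p.1ᶜ ∧ domLE p.2 p.2ᶜ}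

theorem goodPairsBelow_mono {A' B' : Finset α} (hA : domLE A' A) (hB : domLE B' B) :
    goodPairsBelow A' B' ⊆ goodPairsBelow A B :=
  fun _ hp => ⟨hp.1.trans hA, hp.2.1.trans hB, hp.2.2⟩

theorem mapIndicator_mem_closure_goodPairsBelow (hAB : #A = #B) :
    mapIndicator A B ∈ AddSubgroup.closure
      ((fun p : Finset α × Finset α => mapIndicator p.1 p.2) '' goodPairsBelow A B) := by
  let count : Finset α × Finset α → (α → ℕ) × (α → ℕ) := fun p => (countLE p.1, countLE p.2)
  have hwf : WellFounded (InvImage (· > ·) count) := Finite.wellFounded_of_trans_of_irrefl _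
  induction hp : (A, B) using hwf.induction generalizing A B with
  | _ p ih =>
  subst hp
  have hsmaller : ∀ A' B', #A' = #B' → domLE A' A → domLE B' B → count (A, B) < count (A', B') →
      mapIndicator A' B' ∈ AddSubgroup.closure
        ((fun p : Finset α × Finset α => mapIndicator p.1 p.2) '' goodPairsBelow A B) :=
    fun A' B' hcard hA' hB' hlt => AddSubgroup.closure_mono
      (Set.image_mono (goodPairsBelow_mono hA' hB')) (ih (A', B') hlt hcard rfl)
  by_cases hA : domLE A Aᶜ
  · by_cases hB : domLE B Bᶜ
    · exact AddSubgroup.subset_closure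
        ⟨(A, B), ⟨domLE_refl A, domLE_refl B, hA, hB⟩, rfl⟩
    · refine mapIndicator_mem_of_bad_right hAB hB _ fun A' B' hcard hA' hB' hne => ?_
      exact hsmaller A' B' hcard hA' hB'
        (Prod.mk_lt_mk_of_le_of_lt (domLE_iff.1 hA') (hB'.countLE_lt hne))
  · refine mapIndicator_mem_of_bad_left hAB hA _ fun A' B' hcard hA' hB' hne => ?_
    exact hsmaller A' B' hcard hA' hB'
      (Prod.mk_lt_mk_of_lt_of_le (hA'.countLE_lt hne) (domLE_iff.1 hB'))

end Straightening

theorem exists_sum_units_smul_of_mem_closure {G ι : Type*} [AddCommGroup G] {f : ι → G}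
    {s : Set ι} {g : G} (hg : g ∈ AddSubgroup.closure (f '' s)) :
    ∃ (k : ℕ) (p : Fin k → ι) (ε : Fin k → ℤˣ), (∀ i, p i ∈ s) ∧ g = ∑ i, ε i • f (p i) := by
  rw [← AddSubgroup.mem_toAddSubmonoid, AddSubgroup.closure_toAddSubmonoid] at hg
  obtain ⟨l, hl, rfl⟩ := AddSubmonoid.exists_list_of_mem_closure hg
  have hterm : ∀ i : Fin l.length, ∃ (p : ι) (ε : ℤˣ), p ∈ s ∧ l[i] = ε • f p := by
    intro i
    rcases hl _ (l.getElem_mem i.isLt) with ⟨p, hp, h⟩ | ⟨p, hp, h⟩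
    · exact ⟨p, 1, hp, by simp [h]⟩
    · exact ⟨p, -1, hp, by simp [h]⟩
  choose p ε hp hε using hterm
  refine ⟨l.length, p, ε, hp, ?_⟩
  simp only [← hε, Fin.getElem_fin, Fin.sum_univ_getElem]

section Laplace

variable {α R : Type*} [Fintype α] [DecidableEq α] [CommRing R]

/-- The linear map `g ↦ ∑ σ, g σ • sign σ • ∏ i, X (σ i) i` on integer-valued functions of
permutations, which weights the terms of the Leibniz expansion of `det X` by `g`. -/
def leibnizSum (X : Matrix α α R) : (Equiv.Perm α → ℤ) →ₗ[ℤ] R :=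
  Fintype.linearCombination ℤ fun σ => Equiv.Perm.sign σ • ∏ i, X (σ i) i

theorem leibnizSum_mapIndicator (X : Matrix α α R) (A B : Finset α) :
    leibnizSum X (mapIndicator A B) =
      (Matrix.of fun i j => if i ∈ A ↔ j ∈ B then X i j else 0).det := by
  rw [leibnizSum, Fintype.linearCombination_apply, Matrix.det_apply]
  refine sum_congr rfl fun σ _ => ?_
  by_cases h : ∀ i, σ i ∈ A ↔ i ∈ B
  · simp [mapIndicator, smul_eq_iff_forall_mem_iff, h]
  · obtain ⟨i, hi⟩ := not_forall.1 h
    rw [mapIndicator, if_neg (mt smul_eq_iff_forall_mem_iff.1 h), zero_smul,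
      prod_eq_zero (mem_univ i) (by simp [hi]), smul_zero]

end Laplace

section ShuffleSign

theorem sum_card_filter_lt {α : Type*} [LinearOrder α] (S : Finset α) :
    ∑ j ∈ S, #{i ∈ S | i < j} = ∑ r ∈ range #S, r := by
  induction S using Finset.induction_on_max with
  | empty => simp
  | insert a S hmax ih =>
    have ha : a ∉ S := fun h => lt_irrefl a (hmax a h)
    have hlast : #{i ∈ insert a S | i < a} = #S := by
      rw [filter_insert, if_neg (lt_irrefl a), filter_true_of_mem hmax]
    have hrest : ∀ j ∈ S, #{i ∈ insert a S | i < j} = #{i ∈ S | i < j} := fun j hj => by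
      rw [filter_insert, if_neg (hmax j hj).not_gt]
    rw [sum_insert ha, hlast, sum_congr rfl hrest, ih, card_insert_of_notMem ha, sum_range_succ,
      add_comm]

variable {n : ℕ}

/-- The number of inversions of the sequence `f`, that is, of pairs `i < j` with `f j < f i`. -/
def inversions {β : Type*} [LinearOrder β] (f : Fin n → β) : ℕ := ∑ j, #{i ∈ Iio j | f j < f i}

theorem sign_eq_neg_one_pow_inversions_add {β : Type*} [LinearOrder β] {f g : Fin n → β}
    (hf : Function.Injective f) (hg : Function.Injective g) {σ : Equiv.Perm (Fin n)}
    (hσ : ∀ i j, g (σ i) < g (σ j) ↔ f i < f j) :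
    (Equiv.Perm.sign σ : ℤ) = (-1) ^ (inversions f + inversions g) := by
  let compare (k : Fin n → β) (i j : Fin n) : ℤ :=
    if k i < k j then 1 else if k j < k i then -1 else 0
  have hprod : ∀ k : Fin n → β, Function.Injective k →
      ∏ j, ∏ i ∈ Iio j, compare k i j = (-1) ^ inversions k := fun k hk => by
    rw [inversions, ← prod_pow_eq_pow_sum]
    refine prod_congr rfl fun j _ => ?_
    rw [← prod_const, prod_filter]
    refine prod_congr rfl fun i hi => ?_
    rcases (hk.ne (mem_Iio.1 hi).ne).lt_or_gt with h | h <;> simp [compare, h, h.not_gt]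
  have hanti : ∀ i j, compare g i j = -compare g j i := fun i j => by
    rcases lt_trichotomy (g i) (g j) with h | h | h <;> simp [compare, h, h.not_gt]
  have hsign := σ.prod_Iio_comp_eq_sign_mul_prod hanti
  have hcompare : ∀ i j, compare g (σ i) (σ j) = compare f i j := fun i j => by
    simp only [compare, hσ]
  simp only [hcompare, hprod f hf, hprod g hg, Int.cast_id] at hsign
  rw [pow_add, hsign, mul_assoc, ← pow_add, Even.neg_one_pow ⟨_, rfl⟩, mul_one]

/-- The key that orders `Fin n` with the elements of `S` before those of `Sᶜ`, keeping the order
inside `S` and inside `Sᶜ`. -/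
def blockKey (S : Finset (Fin n)) (i : Fin n) : ℕ := if i ∈ S then i else n + i

theorem blockKey_injective (S : Finset (Fin n)) : Function.Injective (blockKey S) := by
  intro i j h
  unfold blockKey at h
  grind

theorem inversions_blockKey_add (S : Finset (Fin n)) :
    inversions (blockKey S) + ∑ r ∈ range #S, r = ∑ j ∈ S, (j : ℕ) := by
  have hout : ∀ j ∉ S, #{i ∈ Iio j | blockKey S j < blockKey S i} = 0 := fun j hj => by
    rw [card_eq_zero, filter_eq_empty_iff]
    intro i hi
    have hij : i < j := mem_Iio.1 hi
    unfold blockKey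
    grind
  have hin : ∀ j ∈ S, #{i ∈ Iio j | blockKey S j < blockKey S i} + #{i ∈ S | i < j} = j := by
    intro j hj
    have hkey : ∀ i ∈ Iio j, blockKey S j < blockKey S i ↔ i ∉ S := fun i hi => by
      have hij : i < j := mem_Iio.1 hi
      unfold blockKey
      grind
    have hbelow : ({i ∈ S | i < j} : Finset (Fin n)) = {i ∈ Iio j | ¬ i ∉ S} := by
      ext; simp [and_comm]
    rw [filter_congr hkey, hbelow, card_filter_add_card_filter_not, Fin.card_Iio]
  rw [inversions, ← sum_subset (subset_univ S) fun j _ hj => hout j hj, ← sum_card_filter_lt,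
    ← sum_add_distrib, sum_congr rfl hin]

theorem sign_eq_of_strictMonoOn {A B : Finset (Fin n)} {σ : Equiv.Perm (Fin n)}
    (hσ : σ • A = B) (hA : StrictMonoOn σ A) (hAc : StrictMonoOn σ ↑Aᶜ) :
    (Equiv.Perm.sign σ : ℤ) = (-1) ^ (∑ i ∈ A, ((i : ℕ) + 1) + ∑ j ∈ B, ((j : ℕ) + 1)) := by
  have hmem : ∀ i, σ i ∈ B ↔ i ∈ A := smul_eq_iff_forall_mem_iff.1 hσ
  have hcard : #B = #A := by rw [← hσ, card_smul_finset]
  have hkey : ∀ i j, blockKey B (σ i) < blockKey B (σ j) ↔ blockKey A i < blockKey A j := by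
    intro i j
    by_cases hi : i ∈ A <;> by_cases hj : j ∈ A
    · simpa [blockKey, hmem, hi, hj] using hA.lt_iff_lt hi hj
    · simp only [blockKey, hmem, hi, hj, if_true, if_false]
      lia
    · simp only [blockKey, hmem, hi, hj, if_true, if_false]
      lia
    · simpa [blockKey, hmem, hi, hj] using
        hAc.lt_iff_lt (mem_coe.2 (mem_compl.2 hi)) (mem_coe.2 (mem_compl.2 hj))
  have hexp : ∑ i ∈ A, ((i : ℕ) + 1) + ∑ j ∈ B, ((j : ℕ) + 1) =
      inversions (blockKey A) + inversions (blockKey B) + 2 * (∑ r ∈ range #A, r + #A) := by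
    simp only [sum_add_distrib, sum_const, ← inversions_blockKey_add, hcard, smul_eq_mul, mul_one]
    ring
  rw [sign_eq_neg_one_pow_inversions_add (blockKey_injective A) (blockKey_injective B) hkey, hexp,
    pow_add _ _ (2 * _), pow_mul, neg_one_sq, one_pow, mul_one]

end ShuffleSign

section Shuffle

theorem strictMonoOn_of_orderEmbOfFin {α : Type*} [LinearOrder α] {σ : α → α} {S T : Finset α}
    (h : #T = #S) (hσ : ∀ i, σ (S.orderEmbOfFin rfl i) = T.orderEmbOfFin h i) :
    StrictMonoOn σ S := by
  rw [← range_orderEmbOfFin S rfl]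
  rintro _ ⟨i, rfl⟩ _ ⟨j, rfl⟩ hij
  simpa [hσ] using hij

variable {α : Type*} [Fintype α] [LinearOrder α] {A B : Finset α}

/-- The permutation that maps `A` increasingly onto `B` and `Aᶜ` increasingly onto `Bᶜ`. -/
def shuffle (h : #A = #B) : Equiv.Perm α :=
  (finSumEquivOfFinset rfl rfl).symm.trans
    (finSumEquivOfFinset h.symm (by rw [card_compl, card_compl, h]) : Fin #A ⊕ Fin #Aᶜ ≃ α)

theorem shuffle_finSumEquivOfFinset (h : #A = #B) (hc : #Aᶜ = #Bᶜ) (i : Fin #A ⊕ Fin #Aᶜ) :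
    shuffle h (finSumEquivOfFinset rfl rfl i) = finSumEquivOfFinset h.symm hc.symm i := by
  rw [shuffle, Equiv.trans_apply, Equiv.symm_apply_apply]

theorem shuffle_orderEmbOfFin (h : #A = #B) (i : Fin #A) :
    shuffle h (A.orderEmbOfFin rfl i) = B.orderEmbOfFin h.symm i :=
  shuffle_finSumEquivOfFinset h (by rw [card_compl, card_compl, h]) (Sum.inl i)

theorem shuffle_orderEmbOfFin_compl (h : #A = #B) (hc : #Aᶜ = #Bᶜ) (i : Fin #Aᶜ) :
    shuffle h (Aᶜ.orderEmbOfFin rfl i) = Bᶜ.orderEmbOfFin hc.symm i :=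
  shuffle_finSumEquivOfFinset h hc (Sum.inr i)

theorem shuffle_smul (h : #A = #B) : shuffle h • A = B := by
  refine eq_of_subset_of_card_le (fun y hy => ?_) (by rw [card_smul_finset, h])
  obtain ⟨x, hx, rfl⟩ := mem_smul_finset.1 hy
  obtain ⟨i, rfl⟩ : x ∈ Set.range (A.orderEmbOfFin rfl) := by rwa [range_orderEmbOfFin]
  rw [Equiv.Perm.smul_def, shuffle_orderEmbOfFin]
  exact orderEmbOfFin_mem B h.symm i

theorem sign_shuffle {n : ℕ} {A B : Finset (Fin n)} (h : #A = #B) :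
    (Equiv.Perm.sign (shuffle h) : ℤ) =
      (-1) ^ (∑ i ∈ A, ((i : ℕ) + 1) + ∑ j ∈ B, ((j : ℕ) + 1)) :=
  have hc : #Aᶜ = #Bᶜ := by rw [card_compl, card_compl, h]
  sign_eq_of_strictMonoOn (shuffle_smul h)
    (strictMonoOn_of_orderEmbOfFin h.symm (shuffle_orderEmbOfFin h))
    (strictMonoOn_of_orderEmbOfFin hc.symm (shuffle_orderEmbOfFin_compl h hc))

end Shuffle

section LaplaceProduct

variable {n : ℕ} {R : Type*} [CommRing R]

theorem det_mask_submatrix_shuffle (X : Matrix (Fin n) (Fin n) R) {A B : Finset (Fin n)}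
    (h : #A = #B) :
    ((Matrix.of fun i j => if i ∈ A ↔ j ∈ B then X i j else 0).submatrix id (shuffle h)).det =
      minorM X A B * minorM X Aᶜ Bᶜ := by
  have hc : #Aᶜ = #Bᶜ := by rw [card_compl, card_compl, h]
  have hnotMem (S : Finset (Fin n)) {m : ℕ} (hm : #Sᶜ = m) (i) : Sᶜ.orderEmbOfFin hm i ∉ S :=
    mem_compl.1 (orderEmbOfFin_mem Sᶜ hm i)
  rw [minorM, minorM, dif_pos h, dif_pos hc, ← Matrix.det_fromBlocks_zero₂₁ _ 0,
    ← Matrix.det_submatrix_equiv_self (finSumEquivOfFinset (s := A) rfl rfl)]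
  congr 1
  ext (i | i) (j | j) <;>
    simp [hnotMem, shuffle_orderEmbOfFin, shuffle_orderEmbOfFin_compl h hc]

theorem lap_eq_leibnizSum (X : Matrix (Fin n) (Fin n) R) (A B : Finset (Fin n)) :
    lap X A B = leibnizSum X (mapIndicator A B) := by
  by_cases h : #A = #B
  · have hsign := congrArg (Int.cast (R := R)) (sign_shuffle h)
    rw [Int.cast_pow, Int.cast_neg, Int.cast_one] at hsign
    rw [lap, ← hsign, ← det_mask_submatrix_shuffle X h, Matrix.det_permute', ← mul_assoc,
      ← Int.cast_mul, Int.units_coe_mul_self, Int.cast_one, one_mul, leibnizSum_mapIndicator]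
  · rw [lap, minorM, dif_neg h, mapIndicator_eq_zero h, map_zero, zero_mul, mul_zero]

end LaplaceProduct

/-- Theorem 2 (straightening law for Laplace products): `X{A|B} = Σᵢ ±X{Aᵢ|Bᵢ}` where
`Aᵢ ≤ A`, `Bᵢ ≤ B`, and all `Aᵢ`, `Bᵢ` are good; the same signed combination works for
every `n×n` matrix over every commutative ring. -/
theorem statement9 {n : ℕ} (A B : Finset (Fin n)) (hAB : A.card = B.card) :
    ∃ (k : ℕ) (A' B' : Fin k → Finset (Fin n)) (ε : Fin k → ℤ),
      (∀ i, ε i = 1 ∨ ε i = -1) ∧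
      (∀ i, domLE (A' i) A ∧ domLE (B' i) B ∧ goodSet (A' i) ∧ goodSet (B' i)) ∧
      ∀ (R : Type*) [CommRing R] (X : Matrix (Fin n) (Fin n) R),
        lap X A B = ∑ i, (ε i : R) * lap X (A' i) (B' i) := by
  obtain ⟨k, p, ε, hp, hsum⟩ :=
    exists_sum_units_smul_of_mem_closure (mapIndicator_mem_closure_goodPairsBelow hAB)
  refine ⟨k, fun i => (p i).1, fun i => (p i).2, fun i => ε i, fun i => ?_, hp, fun R _ X => ?_⟩
  · exact Int.isUnit_iff.1 (ε i).isUnit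
  · simp only [lap_eq_leibnizSum, hsum, map_sum, Units.smul_def, map_zsmul, ← zsmul_eq_mul]
end

section
/- Let R be a commutative ring and let X be the generic m×n matrix whose entries are the indeterminates x_{ij} of the polynomial ring R[x_{ij} : 1 ≤ i ≤ m, 1 ≤ j ≤ n]. Then every element of R[x_{ij}] is an R-linear combination of standard monomials in the minors of X, i.e., of products X(A₁|B₁)⋯X(A_r|B_r) with A₁ ≤ ⋯ ≤ A_r and B₁ ≤ ⋯ ≤ B_r (the empty product, r = 0, being allowed). -/
open Finset

/-!
Append the identity matrix to `X`. Up to sign, the minors of `X` of all sizes become the maximal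
minors of this extended matrix, a product of minors of `X` becomes a product of maximal minors, and
the pair of orders on row and column sets becomes the componentwise order on index sequences. So it
is enough to straighten products of maximal minors with increasing index sequences.

If two factors, with index sequences `a` and `b` in this order, are not comparable, say
`b k < a k`, then `b 1 < ⋯ < b k < a k < ⋯ < a m` are `m + 1` indices. A map alternating in the
corresponding `m + 1` vectors of an `m`-dimensional space vanishes; writing this out for the
antisymmetrised product of the two determinants expresses the product through the products in which
some of the larger indices in `a` have been exchanged for smaller ones in `b`. This lowers the
weight of the earlier factor, so the process terminates, by induction on the lexicographically
ordered sequence of weights of the factors.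
-/

section Dominance

variable {α : Type*} [LinearOrder α]

theorem card_filter_orderEmbOfFin (S : Finset α) (p : α → Prop) [DecidablePred p] :
    #{i | p (S.orderEmbOfFin rfl i)} = #{x ∈ S | p x} := by
  conv_rhs => rw [← S.map_orderEmbOfFin_univ rfl, filter_map, card_map]
  rfl

theorem domLE_of_card_filter_le {S T : Finset α}
    (hcount : ∀ x, #{i ∈ T | i ≤ x} ≤ #{i ∈ S | i ≤ x}) : domLE S T := by
  have hcard : #T ≤ #S := by
    rcases T.eq_empty_or_nonempty with rfl | hT
    · exact Nat.zero_le _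
    · calc #T = #{i ∈ T | i ≤ T.max' hT} := by rw [filter_true_of_mem fun i hi => T.le_max' i hi]
        _ ≤ #{i ∈ S | i ≤ T.max' hT} := hcount _
        _ ≤ #S := card_filter_le _ _
  refine ⟨hcard, fun ν hνT hνS => ?_⟩
  let k : Fin #T := ⟨ν, by simpa using hνT⟩
  let l : Fin #S := ⟨ν, by simpa using hνS⟩
  change S.orderEmbOfFin rfl l ≤ T.orderEmbOfFin rfl k
  by_contra! hlt
  have hT : ν + 1 ≤ #{i ∈ T | i ≤ T.orderEmbOfFin rfl k} := by
    rw [← card_filter_orderEmbOfFin, ← show #(Iic k) = ν + 1 from Fin.card_Iic k]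
    exact card_le_card fun i hi => by simpa using hi
  have hS : #{i ∈ S | i ≤ T.orderEmbOfFin rfl k} ≤ ν := by
    rw [← card_filter_orderEmbOfFin, ← show #(Iio l) = ν from Fin.card_Iio l]
    exact card_le_card fun i hi =>
      mem_Iio.2 ((S.orderEmbOfFin rfl).lt_iff_lt.1 ((mem_filter.1 hi).2.trans_lt hlt))
  exact absurd (hT.trans ((hcount _).trans hS)) (Nat.not_succ_le_self ν)

end Dominance

section Shuffle

variable {α β : Type*}

theorem exists_apply_inl_eq_inr [Finite α] [Finite β] {σ : Equiv.Perm (α ⊕ β)}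
    (hσ : (Quotient.mk'' σ : Equiv.Perm.ModSumCongr α β) ≠ Quotient.mk'' 1) :
    ∃ i j, σ (Sum.inl i) = Sum.inr j := by
  contrapose! hσ
  symm
  rw [Quotient.eq'', QuotientGroup.leftRel_apply, inv_one, one_mul]
  apply Equiv.Perm.mem_sumCongrHom_range_of_perm_mapsTo_inl
  rintro _ ⟨i, rfl⟩
  cases h : σ (Sum.inl i) with
  | inl i' => exact ⟨i', rfl⟩
  | inr j => exact absurd h (hσ i j)

theorem sum_lt_sum_of_card_eq_of_forall_lt {s t : Finset α} {f : α → ℕ} (hcard : #s = #t)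
    (hs : s.Nonempty) (hlt : ∀ x ∈ s, ∀ y ∈ t, f x < f y) : ∑ x ∈ s, f x < ∑ y ∈ t, f y := by
  have ht : t.Nonempty := by rwa [← card_pos, ← hcard, card_pos]
  obtain ⟨y, hy, hmin⟩ := t.exists_min_image f ht
  calc ∑ x ∈ s, f x < ∑ _x ∈ s, f y := sum_lt_sum_of_nonempty hs fun x hx => hlt x hx y hy
    _ = #t • f y := by rw [sum_const, hcard]
    _ ≤ ∑ y ∈ t, f y := card_nsmul_le_sum t f _ hmin

theorem sum_apply_inl_lt [Fintype α] {f : α ⊕ β → ℕ}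
    (hf : ∀ i j, f (Sum.inr j) < f (Sum.inl i)) {σ : Equiv.Perm (α ⊕ β)}
    (hσ : ∃ i j, σ (Sum.inl i) = Sum.inr j) :
    ∑ i, f (σ (Sum.inl i)) < ∑ i, f (Sum.inl i) := by
  classical
  set left : Finset (α ⊕ β) := univ.map Function.Embedding.inl with hleft
  set moved : Finset (α ⊕ β) := left.map σ.toEmbedding with hmoved
  have hsum_left : ∑ i, f (Sum.inl i) = ∑ x ∈ left, f x := by simp [hleft]
  have hsum_moved : ∑ i, f (σ (Sum.inl i)) = ∑ x ∈ moved, f x := by simp [hmoved, hleft]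
  rw [hsum_left, hsum_moved, ← sum_sdiff_lt_sum_sdiff]
  refine sum_lt_sum_of_card_eq_of_forall_lt (card_sdiff_comm (card_map _)) ?_ ?_
  · obtain ⟨i, j, hij⟩ := hσ
    exact ⟨Sum.inr j, mem_sdiff.2
      ⟨mem_map.2 ⟨Sum.inl i, by simp [hleft], hij⟩, by simp [hleft]⟩⟩
  · rintro (i | j) hx (i' | j') hy
    · simp [hleft] at hx
    · simp [hleft] at hy
    · exact hf i' j
    · simp [hleft] at hy

end Shuffle

section Extend

variable {ι κ : Type*}

theorem extend_val_apply_of_not {P : ι → Prop} (v : {i // P i} → κ) (a : ι → κ) {i : ι}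
    (hi : ¬ P i) : Function.extend Subtype.val v a i = a i :=
  Function.extend_apply' _ _ _ fun ⟨j, hj⟩ => hi (hj ▸ j.2)

theorem extend_val_comp_val (P : ι → Prop) (a : ι → κ) :
    Function.extend Subtype.val (a ∘ (Subtype.val : {i // P i} → ι)) a = a := by
  ext i
  by_cases hi : P i
  · exact Subtype.val_injective.extend_apply _ a ⟨i, hi⟩
  · exact extend_val_apply_of_not _ a hi

theorem sum_extend_val_lt [Fintype ι] {P : ι → Prop} [DecidablePred P] {w : κ → ℕ} {a : ι → κ}
    {v : {i // P i} → κ} (hlt : ∑ i, w (v i) < ∑ i : {i // P i}, w (a i)) :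
    ∑ i, w (Function.extend Subtype.val v a i) < ∑ i, w (a i) := by
  rw [← Fintype.sum_subtype_add_sum_subtype P,
    ← Fintype.sum_subtype_add_sum_subtype P fun i => w (a i)]
  refine add_lt_add_of_lt_of_le ?_ (sum_le_sum fun i _ => ?_)
  · simpa only [Subtype.val_injective.extend_apply] using hlt
  · rw [extend_val_apply_of_not v a i.2]

end Extend

section Exchange

variable {ι κ S : Type*} [Fintype ι] [CommRing S]

theorem alternatingMap_eq_zero_of_card_lt {ι' N : Type*} [Fintype ι'] [AddCommGroup N]
    [Module S N] (hcard : Fintype.card ι < Fintype.card ι') (f : (ι → S) [⋀^ι']→ₗ[S] N) :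
    f = 0 := by
  classical
  exact (Pi.basisFun S ι).ext_alternating fun v hv =>
    absurd (Fintype.card_le_of_injective v hv) hcard.not_ge

theorem mul'_domCoprod_summand {M α β : Type*} [AddCommGroup M] [Module S M] [Fintype α]
    [Fintype β] [DecidableEq α] [DecidableEq β] (f : M [⋀^α]→ₗ[S] S) (g : M [⋀^β]→ₗ[S] S)
    (σ : Equiv.Perm (α ⊕ β)) (v : α ⊕ β → M) :
    LinearMap.mul' S S (AlternatingMap.domCoprod.summand f g (Quotient.mk'' σ) v) =
      Equiv.Perm.sign σ • (f (v ∘ σ ∘ Sum.inl) * g (v ∘ σ ∘ Sum.inr)) := by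
  rw [AlternatingMap.domCoprod.summand_mk'']
  rcases Int.units_eq_one_or (Equiv.Perm.sign σ) with h | h <;> simp [h, Function.comp_def]

theorem alternatingMap_mul_mem_closure {α β : Type*} [Fintype α] [Fintype β]
    (hcard : Fintype.card ι < Fintype.card α + Fintype.card β) (f : (ι → S) [⋀^α]→ₗ[S] S)
    (g : (ι → S) [⋀^β]→ₗ[S] S) (v : α ⊕ β → ι → S) :
    f (v ∘ Sum.inl) * g (v ∘ Sum.inr) ∈ AddSubgroup.closure
      {x | ∃ σ : Equiv.Perm (α ⊕ β), (∃ i j, σ (Sum.inl i) = Sum.inr j) ∧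
        x = f (v ∘ σ ∘ Sum.inl) * g (v ∘ σ ∘ Sum.inr)} := by
  classical
  -- The summand of the vanishing map `f.domCoprod g` at the trivial shuffle is the given product.
  have sum_eq_zero : ∑ q, LinearMap.mul' S S (AlternatingMap.domCoprod.summand f g q v) = 0 := by
    rw [← map_sum, ← _root_.sum_apply, ← AlternatingMap.domCoprod_apply,
      alternatingMap_eq_zero_of_card_lt (by rwa [Fintype.card_sum]) (f.domCoprod g)]
    exact map_zero _
  let q₁ : Equiv.Perm.ModSumCongr α β := Quotient.mk'' 1
  have isolate := (add_sum_erase univ _ (mem_univ q₁)).trans sum_eq_zero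
  have term_one : LinearMap.mul' S S (AlternatingMap.domCoprod.summand f g q₁ v) =
      f (v ∘ Sum.inl) * g (v ∘ Sum.inr) := by
    rw [mul'_domCoprod_summand, Equiv.Perm.sign_one, one_smul, Equiv.Perm.coe_one,
      Function.id_comp, Function.id_comp]
  rw [← term_one, eq_neg_of_add_eq_zero_left isolate]
  refine neg_mem (sum_mem fun q hq => ?_)
  induction q using Quotient.inductionOn' with | _ σ
  rw [mul'_domCoprod_summand, Units.smul_def]
  refine zsmul_mem (AddSubgroup.subset_closure ?_) _
  exact ⟨σ, exists_apply_inl_eq_inr (ne_of_mem_erase hq), rfl⟩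

section

variable [DecidableEq ι]

/-- The determinant as an alternating function of the rows whose index satisfies `P`, the other
rows being those of `M`. -/
def detRestrict (P : ι → Prop) [DecidablePred P] (M : Matrix ι ι S) :
    (ι → S) [⋀^{i // P i}]→ₗ[S] S where
  toMultilinearMap := Matrix.detRowAlternating.toMultilinearMap.domDomRestrict P fun i => M.row i
  map_eq_zero_of_eq' v i j hv hij :=
    Matrix.det_zero_of_row_eq (fun h => hij (Subtype.ext h)) (by simp [i.2, j.2, hv])

theorem detRestrict_submatrix (P : ι → Prop) [DecidablePred P] (Y : Matrix κ ι S) (a : ι → κ)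
    (v : {i // P i} → κ) :
    detRestrict P (Y.submatrix a id) (Y.row ∘ v) =
      (Y.submatrix (Function.extend Subtype.val v a) id).det := by
  refine congrArg Matrix.det (funext fun i => ?_)
  change (if hi : P i then Y (v ⟨i, hi⟩) else Y (a i)) = Y (Function.extend Subtype.val v a i)
  split_ifs with hi
  · exact congrArg Y (Subtype.val_injective.extend_apply v a ⟨i, hi⟩).symm
  · rw [extend_val_apply_of_not v a hi]

theorem det_submatrix_mul_det_submatrix_mem_closure (Y : Matrix κ ι S) (P Q : ι → Prop)
    [DecidablePred P] [DecidablePred Q]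
    (hcard : Fintype.card ι < Fintype.card {i // P i} + Fintype.card {i // Q i}) (a b : ι → κ) :
    (Y.submatrix a id).det * (Y.submatrix b id).det ∈ AddSubgroup.closure
      {x | ∃ σ : Equiv.Perm ({i // P i} ⊕ {i // Q i}), (∃ i j, σ (Sum.inl i) = Sum.inr j) ∧
        x = (Y.submatrix (Function.extend Subtype.val
              (Sum.elim (a ∘ Subtype.val) (b ∘ Subtype.val) ∘ σ ∘ Sum.inl) a) id).det *
            (Y.submatrix (Function.extend Subtype.val
              (Sum.elim (a ∘ Subtype.val) (b ∘ Subtype.val) ∘ σ ∘ Sum.inr) b) id).det} := by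
  have exchange := alternatingMap_mul_mem_closure hcard (detRestrict P (Y.submatrix a id))
    (detRestrict Q (Y.submatrix b id))
    (Y.row ∘ Sum.elim (a ∘ Subtype.val) (b ∘ Subtype.val))
  simp only [Function.comp_assoc, detRestrict_submatrix, Sum.elim_comp_inl, Sum.elim_comp_inr,
    extend_val_comp_val] at exchange
  exact exchange

end

theorem det_submatrix_mul_det_submatrix_mem_closure_of_lt [LinearOrder ι] [LinearOrder κ]
    (Y : Matrix κ ι S) {w : κ → ℕ} (hw : StrictMono w) {a b : ι → κ} (ha : Monotone a)
    (hb : Monotone b) {k : ι} (hk : b k < a k) :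
    (Y.submatrix a id).det * (Y.submatrix b id).det ∈ AddSubgroup.closure
      {x | ∃ a' b' : ι → κ, ∑ i, w (a' i) < ∑ i, w (a i) ∧
        x = (Y.submatrix a' id).det * (Y.submatrix b' id).det} := by
  have hcard : Fintype.card ι < Fintype.card {i // k ≤ i} + Fintype.card {i // i ≤ k} := by
    rw [Fintype.card_subtype, Fintype.card_subtype, ← card_union_add_card_inter]
    have hunion : filter (k ≤ ·) univ ∪ filter (· ≤ k) univ = univ := by
      ext i; simpa using le_total k i
    rw [hunion, card_univ]
    exact Nat.lt_add_of_pos_right (card_pos.2 ⟨k, by simp⟩)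
  -- Every `b i` with `i ≤ k` is smaller than every `a i` with `k ≤ i`, so shuffling the two groups
  -- can only make `a` lighter.
  refine AddSubgroup.closure_mono ?_
    (det_submatrix_mul_det_submatrix_mem_closure Y (k ≤ ·) (· ≤ k) hcard a b)
  rintro _ ⟨σ, hσ, rfl⟩
  refine ⟨_, _, sum_extend_val_lt ?_, rfl⟩
  refine sum_apply_inl_lt (f := w ∘ Sum.elim (a ∘ Subtype.val) (b ∘ Subtype.val))
    (fun i j => hw ?_) hσ
  exact (hb j.2).trans_lt (hk.trans_le (ha i.2))

end Exchange

section Straightening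

theorem det_eq_units_smul_det_submatrix {α β S : Type*} [Fintype α] [DecidableEq α] [Fintype β]
    [DecidableEq β] [CommRing S] (M : Matrix β β S) (φ ψ : α ≃ β) :
    ∃ ε : ℤˣ, M.det = ε • (M.submatrix φ ψ).det := by
  refine ⟨Equiv.Perm.sign (φ.symm.trans ψ), ?_⟩
  have hM : M.submatrix φ ψ = (M.submatrix id (φ.symm.trans ψ)).submatrix φ φ := by
    ext; simp
  rw [hM, Matrix.det_submatrix_equiv_self, Matrix.det_permute', Units.smul_def, zsmul_eq_mul,
    ← mul_assoc, ← Int.cast_mul, ← Units.val_mul, Int.units_mul_self, Units.val_one, Int.cast_one,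
    one_mul]

variable {ρ κ S : Type*} [Fintype ρ] [CommRing S]

theorem prod_mem_of_forall_eq_units_smul {P : AddSubgroup S} {F G : ρ → S}
    (hFG : ∀ i, ∃ ε : ℤˣ, F i = ε • G i) (hG : ∏ i, G i ∈ P) : ∏ i, F i ∈ P := by
  choose ε hε using hFG
  simp_rw [hε, prod_smul, Units.smul_def]
  exact zsmul_mem hG _

variable [LinearOrder ρ] [LinearOrder κ]

theorem prod_det_submatrix_mem_closure_of_lt {ι : Type*} [Fintype ι] [LinearOrder ι]
    (Y : Matrix κ ι S) {w : κ → ℕ} (hw : StrictMono w) {s : ρ → ι → κ} (hs : ∀ l, Monotone (s l))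
    {i j : ρ} (hij : i < j) {k : ι} (hk : s j k < s i k) :
    ∏ l, (Y.submatrix (s l) id).det ∈ AddSubgroup.closure
      {x | ∃ u : ρ → ι → κ, toLex (fun l => ∑ k, w (u l k)) < toLex (fun l => ∑ k, w (s l k)) ∧
        x = ∏ l, (Y.submatrix (u l) id).det} := by
  have prod_split (f : ρ → S) : f i * f j * ∏ l ∈ {i, j}ᶜ, f l = ∏ l, f l := by
    rw [← prod_pair hij.ne, prod_mul_prod_compl]
  have exchange := det_submatrix_mul_det_submatrix_mem_closure_of_lt Y hw (hs i) (hs j) hk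
  rw [← prod_split]
  set c := ∏ l ∈ {i, j}ᶜ, (Y.submatrix (s l) id).det with hc
  have exchange_mul := AddSubgroup.mem_map_of_mem (AddMonoidHom.mulRight c) exchange
  rw [AddMonoidHom.map_closure] at exchange_mul
  refine AddSubgroup.closure_le _ |>.2 ?_ exchange_mul
  rintro _ ⟨_, ⟨a', b', hlt, rfl⟩, rfl⟩
  let u := Function.update (Function.update s i a') j b'
  have hui : u i = a' := by simp [u, hij.ne]
  have huj : u j = b' := by simp [u]
  have hul {l : ρ} (hi : l ≠ i) (hj : l ≠ j) : u l = s l := by simp [u, hi, hj]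
  refine AddSubgroup.subset_closure ⟨u, ⟨i, fun l hl => ?_, ?_⟩, ?_⟩
  · exact congrArg (fun v : ι → κ => ∑ k, w (v k)) (hul hl.ne (hl.trans hij).ne)
  · simpa only [Pi.toLex_apply, hui] using hlt
  · rw [← prod_split, hui, huj, AddMonoidHom.mulRight_apply, hc]
    refine congrArg _ (prod_congr rfl fun l hl => ?_)
    rw [hul] <;> rintro rfl <;> simp at hl

theorem prod_det_submatrix_mem_closure_monotone [Finite κ] {m : ℕ} (Y : Matrix κ (Fin m) S)
    (t : ρ → Fin m → κ) :
    ∏ l, (Y.submatrix (t l) id).det ∈ AddSubgroup.closure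
      {x | ∃ u : ρ → Fin m → κ, (∀ l, StrictMono (u l)) ∧ Monotone u ∧
        x = ∏ l, (Y.submatrix (u l) id).det} := by
  obtain ⟨w, hw⟩ : ∃ w : κ → ℕ, StrictMono w := by
    have := Fintype.ofFinite κ
    exact ⟨_, Fin.val_strictMono.comp (Fintype.orderIsoFinOfCardEq κ rfl).symm.strictMono⟩
  let weight (t : ρ → Fin m → κ) : Lex (ρ → ℕ) := toLex fun l => ∑ k, w (t l k)
  induction t using (InvImage.wf weight wellFounded_lt).induction with | _ t ih
  by_cases hinj : ∀ l, Function.Injective (t l)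
  swap
  · push Not at hinj
    obtain ⟨l, hl⟩ := hinj
    obtain ⟨k, k', hkk', hne⟩ := Function.not_injective_iff.1 hl
    rw [prod_eq_zero (mem_univ l) (Matrix.det_zero_of_row_eq hne (congrArg Y hkk'))]
    exact zero_mem _
  let s (l : ρ) : Fin m → κ := t l ∘ Tuple.sort (t l)
  have hs (l : ρ) : StrictMono (s l) :=
    (Tuple.monotone_sort (t l)).strictMono_of_injective
      ((hinj l).comp (Tuple.sort (t l)).injective)
  have weight_sort : weight s = weight t :=
    congrArg toLex (funext fun l => Equiv.sum_comp (Tuple.sort (t l)) fun k => w (t l k))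
  refine prod_mem_of_forall_eq_units_smul (G := fun l => (Y.submatrix (s l) id).det)
    (fun l => det_eq_units_smul_det_submatrix _ (Tuple.sort (t l)) (Equiv.refl _)) ?_
  by_cases hmono : Monotone s
  · exact AddSubgroup.subset_closure ⟨s, hs, hmono, rfl⟩
  obtain ⟨i, j, hij, k, hk⟩ : ∃ i j, i < j ∧ ∃ k, s j k < s i k := by
    simpa only [monotone_iff_forall_lt, Pi.le_def, not_forall, not_le, exists_prop] using hmono
  refine (AddSubgroup.closure_le _).2 ?_
    (prod_det_submatrix_mem_closure_of_lt Y hw (fun l => (hs l).monotone) hij hk)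
  rintro _ ⟨u, hlt, rfl⟩
  exact ih u (hlt.trans_eq weight_sort)

end Straightening

section Range

theorem card_filter_mem_range_comm {α β γ : Type*} [Fintype α] [Fintype β] [DecidableEq γ]
    {f : α → γ} {g : β → γ} (hf : Function.Injective f) (hg : Function.Injective g)
    (p : γ → Prop) [DecidablePred p] :
    #{a | f a ∈ Set.range g ∧ p (f a)} = #{b | g b ∈ Set.range f ∧ p (g b)} := by
  rw [← card_image_of_injective _ hf, ← card_image_of_injective _ hg]
  congr 1
  ext c
  simp only [mem_image, mem_filter, mem_univ, true_and, Set.mem_range]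
  constructor <;> rintro ⟨a, ⟨⟨b, hb⟩, hp⟩, rfl⟩ <;> exact ⟨b, ⟨⟨a, hb.symm⟩, hb ▸ hp⟩, hb⟩

theorem exists_equiv_comp_eq {α β γ : Type*} {f : α → γ} {g : β → γ} (hf : Function.Injective f)
    (hg : Function.Injective g) (hfg : Set.range f = Set.range g) : ∃ φ : α ≃ β, g ∘ φ = f := by
  refine ⟨(Equiv.ofInjective f hf).trans
    ((Equiv.setCongr hfg).trans (Equiv.ofInjective g hg).symm), funext fun a => ?_⟩
  simp [Equiv.apply_ofInjective_symm hg]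

end Range

section LexSum

variable {α β : Type*}

theorem inlₗ_injective : Function.Injective (Sum.inlₗ : α → α ⊕ₗ β) :=
  toLex.injective.comp Sum.inl_injective

theorem inrₗ_injective : Function.Injective (Sum.inrₗ : β → α ⊕ₗ β) :=
  toLex.injective.comp Sum.inr_injective

theorem range_inrₗ : Set.range (Sum.inrₗ : β → α ⊕ₗ β) = (Set.range Sum.inlₗ)ᶜ := by
  ext k
  obtain ⟨k | k, rfl⟩ := toLex.surjective k <;> simp [Sum.inlₗ, Sum.inrₗ]

theorem isLowerSet_range_inlₗ [LE α] [LE β] :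
    IsLowerSet (Set.range (Sum.inlₗ : α → α ⊕ₗ β)) := by
  rintro _ k hk ⟨j, rfl⟩
  by_contra hk'
  rw [← Set.mem_compl_iff, ← range_inrₗ] at hk'
  obtain ⟨i, rfl⟩ := hk'
  exact Sum.Lex.not_inr_le_inl hk

end LexSum

section ExtendedMatrix

variable {m n : ℕ} {S : Type*} [CommRing S]

/-- The matrix with `n + m` rows consisting of the columns of `X` followed by the unit vectors
`e_m, …, e_1`, whose maximal minors are, up to sign, the minors of `X` of all sizes. The unit
vectors are listed backwards for the order of the row indices to be compatible with `domLE`. -/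
def extendedMatrix (X : Matrix (Fin m) (Fin n) S) : Matrix (Fin n ⊕ₗ (Fin m)ᵒᵈ) (Fin m) S :=
  Matrix.of fun k =>
    Sum.elim X.col ((1 : Matrix (Fin m) (Fin m) S).row ∘ OrderDual.ofDual) (ofLex k)

/-- The index of the row `e_i` of `extendedMatrix X`. -/
abbrev unitIndex (n : ℕ) (i : Fin m) : Fin n ⊕ₗ (Fin m)ᵒᵈ := Sum.inrₗ (OrderDual.toDual i)

/-- The row set of the minor of `X` equal, up to sign, to the maximal minor of
`extendedMatrix X` on the rows `t`: the `i` for which the unit vector `e_i` is not used. -/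
def rowSet (t : Fin m → Fin n ⊕ₗ (Fin m)ᵒᵈ) : Finset (Fin m) :=
  {i | unitIndex n i ∉ Set.range t}

/-- The column set of the minor of `X` equal, up to sign, to the maximal minor of
`extendedMatrix X` on the rows `t`: the `j` for which the `j`-th column of `X` is used. -/
def colSet (t : Fin m → Fin n ⊕ₗ (Fin m)ᵒᵈ) : Finset (Fin n) :=
  {j | Sum.inlₗ j ∈ Set.range t}

theorem unitIndex_injective : Function.Injective (unitIndex n : Fin m → _) :=
  inrₗ_injective.comp OrderDual.toDual.injective

theorem range_unitIndex : Set.range (unitIndex n : Fin m → _) = (Set.range Sum.inlₗ)ᶜ :=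
  (OrderDual.toDual.surjective.range_comp Sum.inrₗ).trans range_inrₗ

theorem isUpperSet_range_unitIndex : IsUpperSet (Set.range (unitIndex n : Fin m → _)) := by
  rw [range_unitIndex]
  exact isLowerSet_range_inlₗ.compl

theorem image_inlₗ_colSet_union_image_unitIndex (t : Fin m → Fin n ⊕ₗ (Fin m)ᵒᵈ) :
    Sum.inlₗ '' (colSet t) ∪ unitIndex n '' {i | i ∉ rowSet t} = Set.range t := by
  have hcol : (colSet t : Set (Fin n)) = Sum.inlₗ ⁻¹' Set.range t := by ext; simp [colSet]
  have hrow : {i | i ∉ rowSet t} = unitIndex n ⁻¹' Set.range t := by ext; simp [rowSet]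
  rw [hcol, hrow, Set.image_preimage_eq_inter_range, Set.image_preimage_eq_inter_range,
    range_unitIndex, ← Set.inter_union_distrib_left, Set.union_compl_self, Set.inter_univ]

section Counting

variable {t u : Fin m → Fin n ⊕ₗ (Fin m)ᵒᵈ}

theorem card_filter_colSet (ht : Function.Injective t) (p : Fin n ⊕ₗ (Fin m)ᵒᵈ → Prop)
    [DecidablePred p] :
    #{j ∈ colSet t | p (Sum.inlₗ j)} = #{ν | t ν ∈ Set.range Sum.inlₗ ∧ p (t ν)} := by
  rw [colSet, filter_filter]
  exact card_filter_mem_range_comm inlₗ_injective ht p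

theorem card_filter_compl_rowSet (ht : Function.Injective t) (p : Fin n ⊕ₗ (Fin m)ᵒᵈ → Prop)
    [DecidablePred p] :
    #{i ∈ (rowSet t)ᶜ | p (unitIndex n i)} = #{ν | t ν ∈ Set.range (unitIndex n) ∧ p (t ν)} := by
  rw [rowSet, compl_filter, filter_filter]
  simpa only [not_not] using card_filter_mem_range_comm unitIndex_injective ht p

theorem card_rowSet (ht : Function.Injective t) : #(rowSet t) = #(colSet t) := by
  have hcol : #(colSet t) = #{ν | t ν ∈ Set.range Sum.inlₗ} := by
    simpa using card_filter_colSet ht fun _ => True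
  have hrow : #(rowSet t)ᶜ = #{ν | t ν ∉ Set.range Sum.inlₗ} := by
    simpa only [range_unitIndex, Set.mem_compl_iff, and_true, filter_true] using
      card_filter_compl_rowSet ht fun _ => True
  have hsplit := card_filter_add_card_filter_not (s := univ) fun ν => t ν ∈ Set.range Sum.inlₗ
  rw [← hcol, ← hrow] at hsplit
  have := card_add_card_compl (rowSet t)
  rw [card_univ] at hsplit
  lia

theorem domLE_colSet (ht : Function.Injective t) (hu : Function.Injective u) (htu : t ≤ u) :
    domLE (colSet t) (colSet u) := by
  refine domLE_of_card_filter_le fun x => ?_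
  have ht' := card_filter_colSet ht (· ≤ Sum.inlₗ x)
  have hu' := card_filter_colSet hu (· ≤ Sum.inlₗ x)
  simp only [Sum.Lex.inl_le_inl_iff, Sum.inlₗ] at ht' hu'
  rw [ht', hu']
  exact card_le_card (monotone_filter_right _ fun ν _ hν =>
    ⟨isLowerSet_range_inlₗ (htu ν) hν.1, (htu ν).trans hν.2⟩)

theorem domLE_rowSet (ht : Function.Injective t) (hu : Function.Injective u) (htu : t ≤ u) :
    domLE (rowSet t) (rowSet u) := by
  refine domLE_of_card_filter_le fun x => ?_
  have hcompl : #{i ∈ (rowSet t)ᶜ | i ≤ x} ≤ #{i ∈ (rowSet u)ᶜ | i ≤ x} := by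
    have ht' := card_filter_compl_rowSet ht (unitIndex n x ≤ ·)
    have hu' := card_filter_compl_rowSet hu (unitIndex n x ≤ ·)
    simp only [unitIndex, Sum.Lex.inr_le_inr_iff, OrderDual.toDual_le_toDual] at ht' hu'
    rw [ht', hu']
    exact card_le_card (monotone_filter_right _ fun ν _ hν =>
      ⟨isUpperSet_range_unitIndex (htu ν) hν.1, hν.2.trans (htu ν)⟩)
  have hsplit (A : Finset (Fin m)) : #{i ∈ A | i ≤ x} + #{i ∈ Aᶜ | i ≤ x} = #(Iic x) := by
    rw [← card_union_of_disjoint (disjoint_filter_filter disjoint_compl_right), ← filter_union,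
      union_compl, filter_ge_eq_Iic]
  have := hsplit (rowSet t)
  have := hsplit (rowSet u)
  lia

end Counting

theorem det_extendedMatrix_submatrix_update (X : Matrix (Fin m) (Fin n) S) (i : Fin m)
    (j : Fin n) :
    ((extendedMatrix X).submatrix (Function.update (unitIndex n) i (Sum.inlₗ j)) id).det =
      X i j := by
  have hupdate : (extendedMatrix X).submatrix (Function.update (unitIndex n) i (Sum.inlₗ j)) id =
      (1 : Matrix (Fin m) (Fin m) S).updateRow i (X.col j) := by
    ext k l
    rcases eq_or_ne k i with rfl | hk
    · simp [extendedMatrix]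
    · simp [extendedMatrix, hk]
  rw [hupdate, ← Matrix.cramer_transpose_apply, Matrix.transpose_one, Matrix.cramer_one]
  rfl

theorem det_extendedMatrix_submatrix_sumElim (X : Matrix (Fin m) (Fin n) S) {A : Finset (Fin m)}
    {B : Finset (Fin n)} (hcard : #A = #B) :
    ((extendedMatrix X).submatrix
        (Sum.elim (Sum.inlₗ ∘ B.orderEmbOfFin hcard.symm)
          (unitIndex n ∘ (Subtype.val : {i // i ∉ A} → Fin m)))
        (Sum.elim (A.orderEmbOfFin rfl) Subtype.val)).det = minorM X A B := by
  have hblocks : (extendedMatrix X).submatrix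
        (Sum.elim (Sum.inlₗ ∘ B.orderEmbOfFin hcard.symm) (unitIndex n ∘ Subtype.val))
        (Sum.elim (A.orderEmbOfFin rfl) Subtype.val) =
      Matrix.fromBlocks
        (X.submatrix (A.orderEmbOfFin rfl) (B.orderEmbOfFin hcard.symm)).transpose
        (Matrix.of fun k (i : {i // i ∉ A}) => X i (B.orderEmbOfFin hcard.symm k))
        0 (1 : Matrix {i // i ∉ A} {i // i ∉ A} S) := by
    ext (k | i) (l | i')
    · rfl
    · rfl
    · exact Matrix.one_apply_ne fun h =>
        i.2 (Eq.subst (motive := (· ∈ A)) h.symm (A.orderEmbOfFin_mem rfl l))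
    · simp [extendedMatrix, Matrix.one_apply, Subtype.ext_iff]
  rw [hblocks, Matrix.det_fromBlocks_zero₂₁, Matrix.det_transpose, Matrix.det_one, mul_one,
    minorM, dif_pos hcard]
  rfl

theorem det_extendedMatrix_submatrix (X : Matrix (Fin m) (Fin n) S)
    {t : Fin m → Fin n ⊕ₗ (Fin m)ᵒᵈ} (ht : Function.Injective t) :
    ∃ ε : ℤˣ, ((extendedMatrix X).submatrix t id).det = ε • minorM X (rowSet t) (colSet t) := by
  have hcard := card_rowSet ht
  obtain ⟨φ, hφ⟩ : ∃ φ : Fin #(rowSet t) ⊕ {i // i ∉ rowSet t} ≃ Fin m,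
      t ∘ φ = Sum.elim (Sum.inlₗ ∘ (colSet t).orderEmbOfFin hcard.symm)
        (unitIndex n ∘ Subtype.val) := by
    refine exists_equiv_comp_eq ?_ ht ?_
    · refine Function.Injective.sumElim
        (inlₗ_injective.comp ((colSet t).orderEmbOfFin _).injective)
        (unitIndex_injective.comp Subtype.val_injective) fun i j h => ?_
      simp [unitIndex, Sum.inlₗ, Sum.inrₗ] at h
    · rw [Set.Sum.elim_range, Set.range_comp, Set.range_comp, range_orderEmbOfFin,
        ← image_inlₗ_colSet_union_image_unitIndex t]
      congr
      exact Subtype.range_val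
  let ψ : Fin #(rowSet t) ⊕ {i // i ∉ rowSet t} ≃ Fin m :=
    (((rowSet t).orderIsoOfFin rfl).toEquiv.sumCongr (Equiv.refl _)).trans
      (Equiv.sumCompl (· ∈ rowSet t))
  have hψ : ⇑ψ = Sum.elim ((rowSet t).orderEmbOfFin rfl) Subtype.val := by
    ext (k | i) <;> rfl
  obtain ⟨ε, hε⟩ := det_eq_units_smul_det_submatrix ((extendedMatrix X).submatrix t id) φ ψ
  refine ⟨ε, ?_⟩
  rw [hε, Matrix.submatrix_submatrix, hφ, hψ, Function.id_comp,
    det_extendedMatrix_submatrix_sumElim X hcard]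

end ExtendedMatrix

section StandardMonomials

variable {m n : ℕ} {R S : Type*} [CommRing R] [CommRing S] [Algebra R S]

/-- The set of standard monomials in the minors of `X`. -/
def standardMonomials (X : Matrix (Fin m) (Fin n) S) : Set S :=
  {p | ∃ (r : ℕ) (A : Fin r → Finset (Fin m)) (B : Fin r → Finset (Fin n)),
    (∀ i j, i ≤ j → domLE (A i) (A j)) ∧ (∀ i j, i ≤ j → domLE (B i) (B j)) ∧
      p = ∏ i, minorM X (A i) (B i)}

theorem minorM_mem_adjoin (X : Matrix (Fin m) (Fin n) S) (A : Finset (Fin m))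
    (B : Finset (Fin n)) :
    minorM X A B ∈ Algebra.adjoin R (Set.range fun p : Fin m × Fin n => X p.1 p.2) := by
  rw [minorM]
  split_ifs with hcard
  · rw [Matrix.det_apply]
    refine sum_mem fun σ _ => ?_
    rw [Units.smul_def]
    refine zsmul_mem (Subalgebra.prod_mem _ fun i _ => Algebra.subset_adjoin ?_) _
    exact Set.mem_range_self (f := fun p : Fin m × Fin n => X p.1 p.2) (_, _)
  · exact zero_mem _

theorem prod_det_extendedMatrix_mem_closure (X : Matrix (Fin m) (Fin n) S) {r : ℕ}
    (t : Fin r → Fin m → Fin n ⊕ₗ (Fin m)ᵒᵈ) :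
    ∏ l, ((extendedMatrix X).submatrix (t l) id).det ∈
      AddSubgroup.closure (standardMonomials X) := by
  refine (AddSubgroup.closure_le _).2 ?_
    (prod_det_submatrix_mem_closure_monotone (extendedMatrix X) t)
  rintro _ ⟨u, hu, hmono, rfl⟩
  refine prod_mem_of_forall_eq_units_smul
    (fun l => det_extendedMatrix_submatrix X (hu l).injective) (AddSubgroup.subset_closure ?_)
  exact ⟨r, _, _, fun i j hij => domLE_rowSet (hu i).injective (hu j).injective (hmono hij),
    fun i j hij => domLE_colSet (hu i).injective (hu j).injective (hmono hij), rfl⟩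

theorem prod_entries_mem_closure (X : Matrix (Fin m) (Fin n) S) {x : S}
    (hx : x ∈ Submonoid.closure (Set.range fun p : Fin m × Fin n => X p.1 p.2)) :
    x ∈ AddSubgroup.closure (standardMonomials X) := by
  obtain ⟨l, hl, rfl⟩ := Submonoid.exists_list_of_mem_closure hx
  choose p hp using fun k : Fin l.length => hl l[k] (l.getElem_mem k.2)
  have hprod : l.prod = ∏ k, ((extendedMatrix X).submatrix
      (Function.update (unitIndex n) (p k).1 (Sum.inlₗ (p k).2)) id).det := by
    rw [← Fin.prod_univ_getElem]
    exact prod_congr rfl fun k _ =>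
      (hp k).symm.trans (det_extendedMatrix_submatrix_update X _ _).symm
  rw [hprod]
  exact prod_det_extendedMatrix_mem_closure X _

theorem statement14_general (X : Matrix (Fin m) (Fin n) S) :
    Submodule.span R (standardMonomials X) = Subalgebra.toSubmodule
      (Algebra.adjoin R (Set.range fun p : Fin m × Fin n => X p.1 p.2)) := by
  apply le_antisymm
  · rw [Submodule.span_le]
    rintro _ ⟨r, A, B, -, -, rfl⟩
    exact Subalgebra.prod_mem _ fun i _ => minorM_mem_adjoin X (A i) (B i)
  · rw [Algebra.adjoin_eq_span, Submodule.span_le]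
    have hle : AddSubgroup.closure (standardMonomials X) ≤
        (Submodule.span R (standardMonomials X)).toAddSubgroup :=
      (AddSubgroup.closure_le _).2 Submodule.subset_span
    exact fun x hx => hle (prod_entries_mem_closure X hx)

end StandardMonomials

/-- Every polynomial in the entries of the generic `m×n` matrix is an `R`-linear
combination of standard monomials in its minors. -/
theorem statement14 (m n : ℕ) (R : Type*) [CommRing R] :
    Submodule.span R {p : MvPolynomial (Fin m × Fin n) R |
      ∃ (r : ℕ) (A : Fin r → Finset (Fin m)) (B : Fin r → Finset (Fin n)),
        (∀ i j, i ≤ j → domLE (A i) (A j)) ∧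
        (∀ i j, i ≤ j → domLE (B i) (B j)) ∧
        p = ∏ i, minorM (genX m n R) (A i) (B i)} = ⊤ := by
  refine (statement14_general (genX m n R)).trans ?_
  exact (congrArg _ MvPolynomial.adjoin_range_X).trans Algebra.top_toSubmodule
end

section
/- Let R be a nonzero commutative ring and let X be the generic m×n matrix whose entries are the distinct indeterminates x_{ij} of the polynomial ring R[x_{ij} : 1 ≤ i ≤ m, 1 ≤ j ≤ n]. Then the standard monomials X(A₁|B₁)⋯X(A_r|B_r) (with A₁ ≤ ⋯ ≤ A_r, B₁ ≤ ⋯ ≤ B_r, and all factors with Aᵢ = Bᵢ = ∅ removed) are pairwise distinct and linearly independent over R. -/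
open Finset

/-- Index data for a standard monomial: a finite list of pairs `(Aᵢ, Bᵢ)` of genuine
minor indices (`|Aᵢ| = |Bᵢ|`, not both empty) with `A₁ ≤ ⋯ ≤ A_r` and `B₁ ≤ ⋯ ≤ B_r`. -/
def StdIdx (m n : ℕ) : Type :=
  {L : List (Finset (Fin m) × Finset (Fin n)) //
    (∀ p ∈ L, p.1.card = p.2.card ∧ p ≠ (∅, ∅)) ∧
    L.Chain' fun p q => domLE p.1 q.1 ∧ domLE p.2 q.2}

/-- The standard monomial `X(A₁|B₁)⋯X(A_r|B_r)` in the minors of the generic matrix. -/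
noncomputable def stdMon (m n : ℕ) (R : Type*) [CommRing R] (L : StdIdx m n) :
    MvPolynomial (Fin m × Fin n) R :=
  (L.1.map fun p => minorM (genX m n R) p.1 p.2).prod

/-!
Specialise `X` to a product `YZ` of generic matrices of sizes `m × m` and `m × n`. By Cauchy–Binet,
the minor `X(A|B)` becomes a sum of products `Y(A|K) Z(K|B)`. For a lexicographic order favouring
the columns of `Y` and rows of `Z` of small index, its leading monomial comes from the diagonal
products with `K = {1, …, |A|}` and has coefficient `1`: it pairs the `k`-th smallest elements of
`A` and of `B` with the index `k`. The leading monomial of a product of minors therefore records,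
for each `k`, how often each index occurs as a `k`-th smallest element of some row set, and likewise
for column sets. In a standard monomial the first row set and the first column set have as `k`-th
smallest element the least of these indices, so they are determined, and inductively so is the whole
standard monomial. Linear independence follows, since distinct standard monomials have distinct
monic leading monomials.
-/

namespace StandardMonomial

open MvPolynomial MonomialOrder

section LeadingMonomial

variable {σ R ι : Type*} [CommRing R] {ord : MonomialOrder σ}

lemma linearIndependent_of_injective_degree {P : ι → MvPolynomial σ R}
    (hdeg : Function.Injective fun i => ord.degree (P i))
    (hlc : ∀ i, ord.leadingCoeff (P i) ∈ nonZeroDivisors R) : LinearIndependent R P := by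
  classical
  rw [linearIndependent_iff']
  intro s c hsum
  by_contra! hne
  obtain ⟨i₀, hi₀⟩ := hne
  obtain ⟨i, hi, hmax⟩ := (s.filter fun i => c i ≠ 0).exists_max_image
    (fun i => ord.toSyn (ord.degree (P i))) ⟨i₀, mem_filter.2 hi₀⟩
  obtain ⟨his, hci⟩ := mem_filter.1 hi
  have hother : ∀ j ∈ s, j ≠ i → coeff (ord.degree (P i)) (c j • P j) = 0 := by
    intro j hj hji
    rw [coeff_smul]
    by_cases hcj : c j = 0
    · rw [hcj, zero_smul]
    · have hlt : ord.degree (P j) ≺[ord] ord.degree (P i) :=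
        (hmax j (mem_filter.2 ⟨hj, hcj⟩)).lt_of_ne fun h => hji (hdeg (ord.toSyn.injective h))
      rw [ord.coeff_eq_zero_of_lt hlt, smul_zero]
  have hcoeff : c i * ord.leadingCoeff (P i) = 0 := by
    have h := congrArg (coeff (ord.degree (P i))) hsum
    rwa [coeff_sum, sum_eq_single_of_mem i his hother, coeff_smul, coeff_zero] at h
  exact hci ((mul_right_mem_nonZeroDivisors_eq_zero_iff (hlc i)).1 hcoeff)

lemma monic_list_prod_and_degree [Nontrivial R] {l : List (MvPolynomial σ R)}
    (h : ∀ f ∈ l, ord.Monic f) :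
    ord.Monic l.prod ∧ ord.degree l.prod = (l.map ord.degree).sum := by
  induction l with
  | nil => exact ⟨ord.monic_one, ord.degree_one⟩
  | cons f l ih =>
    obtain ⟨hf, hl⟩ := List.forall_mem_cons.1 h
    obtain ⟨hmonic, hdeg⟩ := ih hl
    rw [List.prod_cons, List.map_cons, List.sum_cons, ← hdeg]
    refine ⟨hf.mul hmonic, degree_mul_of_mul_leadingCoeff_ne_zero ?_⟩
    rw [hf.leadingCoeff_eq_one, hmonic.leadingCoeff_eq_one, mul_one]
    exact one_ne_zero

lemma monic_sum_and_degree_of_lt {s : Finset ι} {f : ι → MvPolynomial σ R} {i : ι} (hi : i ∈ s)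
    (hmonic : ord.Monic (f i)) (hlt : ∀ j ∈ s, j ≠ i → ord.degree (f j) ≺[ord] ord.degree (f i)) :
    ord.Monic (∑ j ∈ s, f j) ∧ ord.degree (∑ j ∈ s, f j) = ord.degree (f i) := by
  classical
  rw [← add_sum_erase s f hi]
  rcases eq_or_ne (∑ j ∈ s.erase i, f j) 0 with hrest | hrest
  · rw [hrest, add_zero]
    exact ⟨hmonic, rfl⟩
  · have hlt_rest : ord.degree (∑ j ∈ s.erase i, f j) ≺[ord] ord.degree (f i) := by
      obtain ⟨j, hj, hmem⟩ := mem_biUnion.1 (support_sum (ord.degree_mem_support hrest))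
      obtain ⟨hji, hjs⟩ := mem_erase.1 hj
      exact (ord.le_degree hmem).trans_lt (hlt j hjs hji)
    exact ⟨hmonic.add_of_lt hlt_rest, ord.degree_add_of_lt hlt_rest⟩

end LeadingMonomial

lemma sum_map_ite_eq_count_map {ι β : Type*} [DecidableEq β] [BEq β] [LawfulBEq β]
    (f : ι → β) (b : β) (l : List ι) :
    (l.map fun a => if f a = b then 1 else 0).sum = (l.map f).count b := by
  induction l with
  | nil => rfl
  | cons a l ih =>
    simp only [List.map_cons, List.sum_cons, List.count_cons, ih, beq_iff_eq, add_comm]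

lemma det_mul_eq_sum_embedding {ι κ S : Type*} [Fintype ι] [DecidableEq ι] [Fintype κ]
    [CommRing S] (M : Matrix ι κ S) (N : Matrix κ ι S) :
    (M * N).det = ∑ f : ι ↪ κ, (∏ i, N (f i) i) * (M.submatrix id f).det := by
  classical
  have hexpand : (M * N).det = ∑ f : ι → κ, (∏ i, N (f i) i) * (M.submatrix id f).det := by
    have hrows : (M * N).transpose = fun i => ∑ k, N k i • M.transpose k := by
      ext i j
      simp [Matrix.mul_apply, mul_comm]
    rw [← Matrix.det_transpose, hrows]
    refine (Matrix.detRowAlternating.toMultilinearMap.map_sum _).trans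
      (sum_congr rfl fun f _ => ?_)
    rw [MultilinearMap.map_smul_univ, smul_eq_mul, ← Matrix.det_transpose (M.submatrix id f)]
    rfl
  have hvanish : ∀ f : ι → κ, ¬ Function.Injective f →
      (∏ i, N (f i) i) * (M.submatrix id f).det = 0 := by
    intro f hf
    obtain ⟨i, j, hij, hne⟩ := Function.not_injective_iff.1 hf
    rw [Matrix.det_zero_of_column_eq hne fun k => by simp [hij], mul_zero]
  rw [hexpand, ← sum_filter_of_ne (p := Function.Injective) fun f _ hf =>
      not_not.1 fun h => hf (hvanish f h), ← (Equiv.subtypeInjectiveEquivEmbedding ι κ).sum_comp]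
  exact sum_subtype _ (fun f => mem_filter_univ f) _

section Cells

variable {κ α ι : Type*} [Fintype ι]

/-- The exponent vector of the monomial `∏ᵢ x_(g i, c i)`, in which the variable with subscript
`(k, a)` is thought of as a cell of column `k` holding the entry `a`. -/
noncomputable def cellExp (g : ι → κ) (c : ι → α) : κ ×ₗ α →₀ ℕ :=
  ∑ i, Finsupp.single (toLex (g i, c i)) 1

lemma prod_X_eq_monomial_cellExp {R : Type*} [CommRing R] (g : ι → κ) (c : ι → α) :
    ∏ i, (X (toLex (g i, c i)) : MvPolynomial (κ ×ₗ α) R) = monomial (cellExp g c) 1 :=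
  (monomial_sum_one _ _).symm

lemma cellExp_apply_eq_zero {g : ι → κ} {c : ι → α} {d : κ ×ₗ α}
    (hd : ∀ i, toLex (g i, c i) ≠ d) : cellExp g c d = 0 := by
  rw [cellExp, Finsupp.finsetSum_apply]
  exact sum_eq_zero fun i _ => Finsupp.single_eq_of_ne (hd i).symm

lemma cellExp_apply_self {g : ι → κ} (hg : Function.Injective g) {c : ι → α} (i : ι) :
    cellExp g c (toLex (g i, c i)) = 1 := by
  rw [cellExp, Finsupp.finsetSum_apply, Fintype.sum_eq_single i, Finsupp.single_eq_same]
  exact fun j hji => Finsupp.single_eq_of_ne fun h =>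
    hji (hg (congrArg (fun y => Prod.fst (ofLex y)) h)).symm

variable (κ α) in
/-- The generic matrix with rows indexed by `α` and columns by `κ`, whose entry in row `a` and
column `k` is the variable of the cell `(k, a)`. -/
noncomputable def cellMatrix (R : Type*) [CommRing R] :
    Matrix α κ (MvPolynomial (κ ×ₗ α) R) :=
  Matrix.of fun a k => X (toLex (k, a))

variable {N p : ℕ} {R : Type*} [CommRing R]

lemma det_gram_eq_sum_monomial (c d : Fin p → α) :
    ((cellMatrix (Fin N) α R * (cellMatrix (Fin N) α R).transpose).submatrix c d).det =
      ∑ x : (Fin p ↪ Fin N) × Equiv.Perm (Fin p),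
        monomial (cellExp (x.1 ∘ x.2.symm) c + cellExp x.1 d) ((Equiv.Perm.sign x.2 : ℤ) : R) := by
  rw [Matrix.submatrix_mul _ _ c id d Function.bijective_id, det_mul_eq_sum_embedding,
    Fintype.sum_prod_type]
  refine sum_congr rfl fun f _ => ?_
  rw [Matrix.det_apply', mul_sum]
  refine sum_congr rfl fun s _ => ?_
  have hreindex : ∏ i, (X (toLex (f i, c (s i))) : MvPolynomial (Fin N ×ₗ α) R) =
      monomial (cellExp (f ∘ s.symm) c) 1 := by
    rw [← prod_X_eq_monomial_cellExp,
      ← Equiv.prod_comp s fun i => X (toLex ((f ∘ s.symm) i, c i))]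
    simp only [Function.comp_apply, Equiv.symm_apply_apply]
  have hsign : ((Equiv.Perm.sign s : ℤ) : MvPolynomial (Fin N ×ₗ α) R) =
      C ((Equiv.Perm.sign s : ℤ) : R) :=
      (map_intCast (C : R →+* MvPolynomial (Fin N ×ₗ α) R) _).symm
  simp only [cellMatrix, Matrix.submatrix_apply, Matrix.transpose_apply, Matrix.of_apply, id]
  rw [hreindex, prod_X_eq_monomial_cellExp, hsign, C_mul_monomial, monomial_mul, one_mul, mul_one,
    add_comm]

variable [LinearOrder α]

lemma cellExp_lt_cellExp_castLE {c : Fin p → α} (hc : StrictMono c) (hp : p ≤ N)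
    {g : Fin p → Fin N} (hg : Function.Injective g) (hne : g ≠ Fin.castLE hp) :
    toLex (cellExp g c) < toLex (cellExp (Fin.castLE hp) c) := by
  obtain ⟨k, hk, hmin⟩ : ∃ k, g k ≠ Fin.castLE hp k ∧ ∀ i < k, g i = Fin.castLE hp i := by
    obtain ⟨k, hk, hmin⟩ := WellFounded.has_min (wellFounded_lt (α := Fin p))
      {k | g k ≠ Fin.castLE hp k} (Function.ne_iff.1 hne)
    exact ⟨k, hk, fun i hi => not_not.1 fun h => hmin i h hi⟩
  have hcol : ∀ i, k ≤ i → Fin.castLE hp k ≤ g i := by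
    intro i hki
    by_contra! hlt
    let i' : Fin p := ⟨g i, (Fin.lt_def.1 hlt).trans k.isLt⟩
    have hi'k : i' < k := hlt
    have hi' : i' = i := hg (hmin i' hi'k)
    exact (hi' ▸ hi'k).not_ge hki
  have hcell : ∀ i, k ≤ i → toLex (Fin.castLE hp k, c k) < toLex (g i, c i) := by
    intro i hki
    refine Prod.Lex.toLex_lt_toLex.2 ((hcol i hki).lt_or_eq.imp_right fun h => ⟨h, hc ?_⟩)
    refine hki.lt_of_ne ?_
    rintro rfl
    exact hk h.symm
  have hcell' : ∀ i, k ≤ i →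
      toLex (Fin.castLE hp k, c k) ≤ toLex (Fin.castLE hp i, c i) := fun i hki =>
    Prod.Lex.toLex_mono ⟨Fin.castLE_le_castLE_iff hp |>.2 hki, hc.monotone hki⟩
  -- The exponents first differ at the cell `(k, c k)`, which `g` leaves empty.
  refine Finsupp.Lex.lt_iff.2 ⟨toLex (Fin.castLE hp k, c k), fun d hd => ?_, ?_⟩
  all_goals simp only [cellExp, ofLex_toLex, Finsupp.coe_finsetSum, Finset.sum_apply]
  · refine sum_congr rfl fun i _ => ?_
    rcases lt_or_ge i k with hik | hki
    · rw [hmin i hik]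
    · rw [Finsupp.single_eq_of_ne (hd.trans (hcell i hki)).ne,
        Finsupp.single_eq_of_ne (hd.trans_le (hcell' i hki)).ne]
  · refine sum_lt_sum (fun i _ => ?_) ⟨k, mem_univ k, ?_⟩
    · rcases lt_or_ge i k with hik | hki
      · rw [hmin i hik]
      · rw [Finsupp.single_eq_of_ne (hcell i hki).ne]
        exact Nat.zero_le _
    · rw [Finsupp.single_eq_of_ne (hcell k le_rfl).ne, Finsupp.single_eq_same]
      exact Nat.one_pos

lemma cellExp_le_cellExp_castLE {c : Fin p → α} (hc : StrictMono c) (hp : p ≤ N)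
    {g : Fin p → Fin N} (hg : Function.Injective g) :
    toLex (cellExp g c) ≤ toLex (cellExp (Fin.castLE hp) c) := by
  rcases eq_or_ne g (Fin.castLE hp) with rfl | hne
  · exact le_rfl
  · exact (cellExp_lt_cellExp_castLE hc hp hg hne).le

lemma add_cellExp_lt_add_cellExp_castLE {c d : Fin p → α} (hc : StrictMono c) (hd : StrictMono d)
    (hp : p ≤ N) {f : Fin p ↪ Fin N} {s : Equiv.Perm (Fin p)}
    (hne : (f, s) ≠ (Fin.castLEEmb hp, 1)) :
    toLex (cellExp (f ∘ s.symm) c + cellExp f d) <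
      toLex (cellExp (Fin.castLE hp) c + cellExp (Fin.castLE hp) d) := by
  have hinj : Function.Injective (f ∘ s.symm) := f.injective.comp s.symm.injective
  rw [toLex_add, toLex_add]
  by_cases hf : f = Fin.castLEEmb hp
  · subst hf
    refine add_lt_add_of_lt_of_le (cellExp_lt_cellExp_castLE hc hp hinj fun h => hne ?_) le_rfl
    have hs : s = 1 := Equiv.symm_bijective.injective <|
      Equiv.ext fun i => Fin.castLE_injective hp (congrFun h i)
    rw [hs]
  · exact add_lt_add_of_le_of_lt (cellExp_le_cellExp_castLE hc hp hinj)
      (cellExp_lt_cellExp_castLE hd hp f.injective fun h => hf (DFunLike.coe_injective h))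

lemma monic_det_gram_and_degree [Nontrivial R] [WellFoundedGT (Fin N ×ₗ α)]
    {c d : Fin p → α} (hc : StrictMono c) (hd : StrictMono d) (hp : p ≤ N) :
    let D := ((cellMatrix (Fin N) α R * (cellMatrix (Fin N) α R).transpose).submatrix c d).det
    lex.Monic D ∧ lex.degree D = cellExp (Fin.castLE hp) c + cellExp (Fin.castLE hp) d := by
  classical
  let term : (Fin p ↪ Fin N) × Equiv.Perm (Fin p) → MvPolynomial (Fin N ×ₗ α) R := fun x =>
    monomial (cellExp (x.1 ∘ x.2.symm) c + cellExp x.1 d) ((Equiv.Perm.sign x.2 : ℤ) : R)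
  let diag : (Fin p ↪ Fin N) × Equiv.Perm (Fin p) := (Fin.castLEEmb hp, 1)
  have hdiag : term diag =
      monomial (cellExp (Fin.castLE hp) c + cellExp (Fin.castLE hp) d) 1 := by
    simp only [term, diag, Equiv.Perm.sign_one, Units.val_one, Int.cast_one]
    rfl
  have hdeg : lex.degree (term diag) =
      cellExp (Fin.castLE hp) c + cellExp (Fin.castLE hp) d := by
    rw [hdiag, degree_monomial, if_neg one_ne_zero]
  have hdom := monic_sum_and_degree_of_lt (f := term) (mem_univ diag)
    (hdiag ▸ monic_monomial_one) fun x _ hx => by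
      rw [hdeg]
      exact (degree_monomial_le _).trans_lt (add_cellExp_lt_add_cellExp_castLE hc hd hp hx)
  rwa [hdeg, ← det_gram_eq_sum_monomial] at hdom

end Cells

section Entry

variable {α : Type*} [LinearOrder α]

/-- The entry of `S` at position `k`, counted from `0`: the `(k+1)`-st smallest element of `S`, or
`none` if `S` has at most `k` elements. -/
def entry (k : ℕ) (S : Finset α) : Option α := (S.sort (· ≤ ·))[k]?

lemma entry_eq_some_iff {S : Finset α} {p : ℕ} (h : S.card = p) {k : ℕ} {x : α} :
    entry k S = some x ↔ ∃ i : Fin p, (i : ℕ) = k ∧ S.orderEmbOfFin h i = x := by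
  subst h
  simp only [entry, List.getElem?_eq_some_iff, length_sort, Fin.exists_iff, orderEmbOfFin_apply]
  exact ⟨fun ⟨hk, hx⟩ => ⟨k, hk, rfl, hx⟩, fun ⟨_, hi, hik, hx⟩ => by subst hik; exact ⟨hi, hx⟩⟩

lemma lt_card_of_entry_eq_some {S : Finset α} {k : ℕ} {x : α} (h : entry k S = some x) :
    k < S.card := by
  obtain ⟨i, rfl, -⟩ := (entry_eq_some_iff rfl).1 h
  exact i.isLt

lemma exists_entry_eq_some {S : Finset α} {k : ℕ} (h : k < S.card) : ∃ x, entry k S = some x :=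
  ⟨_, (entry_eq_some_iff rfl).2 ⟨⟨k, h⟩, rfl, rfl⟩⟩

lemma domLE_iff_entry {S T : Finset α} :
    domLE S T ↔ ∀ k t, entry k T = some t → ∃ s ≤ t, entry k S = some s := by
  constructor
  · rintro ⟨hcard, hle⟩ k t ht
    obtain ⟨hT, rfl⟩ := List.getElem?_eq_some_iff.1 ht
    have hS : k < (S.sort (· ≤ ·)).length := by
      rw [length_sort] at hT ⊢
      exact hT.trans_le hcard
    exact ⟨_, hle k hT hS, List.getElem?_eq_getElem hS⟩
  · intro h
    refine ⟨?_, fun k hT hS => ?_⟩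
    · by_contra! hlt
      obtain ⟨t, ht⟩ := exists_entry_eq_some hlt
      obtain ⟨s, -, hs⟩ := h _ t ht
      exact (lt_card_of_entry_eq_some hs).false
    · obtain ⟨s, hst, hs⟩ := h k _ (List.getElem?_eq_getElem hT)
      obtain ⟨_, rfl⟩ := List.getElem?_eq_some_iff.1 hs
      exact hst

lemma domLE_refl (S : Finset α) : domLE S S :=
  ⟨le_rfl, fun _ _ _ => le_rfl⟩

lemma domLE_trans {S T U : Finset α} (hST : domLE S T) (hTU : domLE T U) : domLE S U := by
  rw [domLE_iff_entry] at *
  intro k u hu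
  obtain ⟨t, htu, ht⟩ := hTU k u hu
  obtain ⟨s, hst, hs⟩ := hST k t ht
  exact ⟨s, hst.trans htu, hs⟩

lemma domLE_antisymm {S T : Finset α} (hST : domLE S T) (hTS : domLE T S) : S = T := by
  have hsort : S.sort (· ≤ ·) = T.sort (· ≤ ·) := by
    refine List.ext_getElem ?_ fun k hS hT => (hST.2 k hT hS).antisymm (hTS.2 k hS hT)
    rw [length_sort, length_sort]
    exact hTS.1.antisymm hST.1
  rw [← sort_toFinset S (· ≤ ·), hsort, sort_toFinset]

instance : IsTrans (Finset α) domLE := ⟨fun _ _ _ => domLE_trans⟩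

lemma domLE_of_mem_of_count_entry_eq {L L' : List (Finset α)} {S T : Finset α}
    (hcount : ∀ k x, (L.map (entry k)).count (some x) = (L'.map (entry k)).count (some x))
    (hT : T ∈ L) (hS : ∀ U ∈ L', domLE S U) : domLE S T := by
  refine domLE_iff_entry.2 fun k t ht => ?_
  have hmem : some t ∈ L'.map (entry k) := by
    rw [← List.count_pos_iff, ← hcount, List.count_pos_iff, ← ht]
    exact List.mem_map_of_mem hT
  obtain ⟨U, hU, hUt⟩ := List.mem_map.1 hmem
  exact domLE_iff_entry.1 (hS U hU) k t hUt

lemma count_entry_eq_zero_of_card_le {L : List (Finset α)} {k : ℕ} (h : ∀ S ∈ L, S.card ≤ k)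
    (x : α) : (L.map (entry k)).count (some x) = 0 := by
  refine List.count_eq_zero.2 fun hx => ?_
  obtain ⟨S, hS, hSx⟩ := List.mem_map.1 hx
  exact (h S hS).not_gt (lt_card_of_entry_eq_some hSx)

lemma eq_nil_of_count_entry_eq_zero {L : List (Finset α)} (hL : ∀ S ∈ L, S.Nonempty)
    (hcount : ∀ k x, (L.map (entry k)).count (some x) = 0) : L = [] := by
  refine List.eq_nil_iff_forall_not_mem.2 fun S hS => ?_
  obtain ⟨x, hx⟩ := exists_entry_eq_some (card_pos.2 (hL S hS))
  exact List.count_eq_zero.1 (hcount 0 x) (hx ▸ List.mem_map_of_mem hS)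

lemma eq_of_count_entry_eq {L L' : List (Finset α)} (hL : ∀ S ∈ L, S.Nonempty)
    (hL' : ∀ S ∈ L', S.Nonempty) (hchain : L.Pairwise domLE) (hchain' : L'.Pairwise domLE)
    (hcount : ∀ k x, (L.map (entry k)).count (some x) = (L'.map (entry k)).count (some x)) :
    L = L' := by
  induction L generalizing L' with
  | nil => exact (eq_nil_of_count_entry_eq_zero hL' fun k x => (hcount k x).symm).symm
  | cons S L ih =>
    cases L' with
    | nil => exact eq_nil_of_count_entry_eq_zero hL hcount
    | cons S' L' =>
      obtain ⟨hSL, hL_chain⟩ := List.pairwise_cons.1 hchain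
      obtain ⟨hSL', hL'_chain⟩ := List.pairwise_cons.1 hchain'
      have hS'S : domLE S' S := domLE_of_mem_of_count_entry_eq hcount List.mem_cons_self
        (List.forall_mem_cons.2 ⟨domLE_refl S', hSL'⟩)
      have hSS' : domLE S S' := domLE_of_mem_of_count_entry_eq (fun k x => (hcount k x).symm)
        List.mem_cons_self (List.forall_mem_cons.2 ⟨domLE_refl S, hSL⟩)
      obtain rfl := domLE_antisymm hSS' hS'S
      congr 1
      refine ih (List.forall_mem_cons.1 hL).2 (List.forall_mem_cons.1 hL').2 hL_chain hL'_chain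
        fun k x => ?_
      simpa only [List.map_cons, List.count_cons, Nat.add_right_cancel_iff] using hcount k x

lemma eq_of_count_entry_eq_of_card_le {N : ℕ} {L L' : List (Finset α)}
    (hL : ∀ S ∈ L, S.Nonempty ∧ S.card ≤ N) (hL' : ∀ S ∈ L', S.Nonempty ∧ S.card ≤ N)
    (hchain : L.Pairwise domLE) (hchain' : L'.Pairwise domLE)
    (hcount : ∀ (k : Fin N) (x : α),
      (L.map (entry k)).count (some x) = (L'.map (entry k)).count (some x)) : L = L' := by
  refine eq_of_count_entry_eq (fun S hS => (hL S hS).1) (fun S hS => (hL' S hS).1) hchain hchain'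
    fun k x => ?_
  rcases lt_or_ge k N with hk | hk
  · exact hcount ⟨k, hk⟩ x
  · rw [count_entry_eq_zero_of_card_le (fun S hS => (hL S hS).2.trans hk),
      count_entry_eq_zero_of_card_le (fun S hS => (hL' S hS).2.trans hk)]

lemma pairwise_domLE_map {ι : Type*} {f : ι → Finset α} {l : List ι}
    (h : l.IsChain fun a b => domLE (f a) (f b)) : (l.map f).Pairwise domLE :=
  List.isChain_iff_pairwise.1 ((List.isChain_map f).2 h)

lemma cellExp_castLE_orderEmbOfFin_apply {β : Type*} {S : Finset α} {p N : ℕ} (h : S.card = p)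
    (hp : p ≤ N) {e : α → β} (he : Function.Injective e) (k : Fin N) (x : α) :
    cellExp (Fin.castLE hp) (e ∘ S.orderEmbOfFin h) (toLex (k, e x)) =
      if entry k S = some x then 1 else 0 := by
  split_ifs with hentry
  · obtain ⟨i, hik, rfl⟩ := (entry_eq_some_iff h).1 hentry
    obtain rfl : Fin.castLE hp i = k := Fin.ext hik
    exact cellExp_apply_self (Fin.castLE_injective hp) i
  · refine cellExp_apply_eq_zero fun i hi => hentry ((entry_eq_some_iff h).2 ⟨i, ?_, ?_⟩)
    · exact congrArg (fun y => (Prod.fst (ofLex y)).val) hi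
    · exact he (congrArg (fun y => Prod.snd (ofLex y)) hi)

end Entry

lemma nonempty_of_card_eq {α β : Type*} {p : Finset α × Finset β} (h : p.1.card = p.2.card)
    (hp : p ≠ (∅, ∅)) : p.1.Nonempty ∧ p.2.Nonempty := by
  have hiff : p.1.Nonempty ↔ p.2.Nonempty := by rw [← card_pos, ← card_pos, h]
  refine (and_iff_left_of_imp hiff.1).2 (nonempty_iff_ne_empty.2 fun h₁ => hp (Prod.ext h₁ ?_))
  exact card_eq_zero.1 (by rw [← h, h₁, card_empty])

section Substitution

variable (m n : ℕ) (R : Type*) [CommRing R]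

/-- The substitution `X = YZ` of a product of a generic `m×m` matrix `Y` and a generic `m×n` matrix
`Z`. The rows of `Y` and the columns of `Z` are encoded together, as the rows `inlₗ i` and `inrₗ j`
of a single cell matrix, so that `YZ` is a block of its Gram matrix. -/
noncomputable def gramSubst :
    MvPolynomial (Fin m × Fin n) R →ₐ[R] MvPolynomial (Fin m ×ₗ (Fin m ⊕ₗ Fin n)) R :=
  let W := cellMatrix (Fin m) (Fin m ⊕ₗ Fin n) R
  aeval fun ij => (W * W.transpose) (Sum.inlₗ ij.1) (Sum.inrₗ ij.2)

variable {m n}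

lemma gramSubst_minorM {A : Finset (Fin m)} {B : Finset (Fin n)} (h : A.card = B.card) :
    gramSubst m n R (minorM (genX m n R) A B) =
      ((cellMatrix (Fin m) (Fin m ⊕ₗ Fin n) R *
        (cellMatrix (Fin m) (Fin m ⊕ₗ Fin n) R).transpose).submatrix
          (Sum.inlₗ ∘ A.orderEmbOfFin rfl) (Sum.inrₗ ∘ B.orderEmbOfFin h.symm)).det := by
  rw [minorM, dif_pos h, AlgHom.map_det]
  congr 1
  ext1 i j
  exact aeval_X _ _

variable [Nontrivial R]

lemma monic_gramSubst_minorM_and_degree {A : Finset (Fin m)} {B : Finset (Fin n)}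
    (h : A.card = B.card) :
    lex.Monic (gramSubst m n R (minorM (genX m n R) A B)) ∧
      lex.degree (gramSubst m n R (minorM (genX m n R) A B)) =
        cellExp (Fin.castLE (card_finset_fin_le A)) (Sum.inlₗ ∘ A.orderEmbOfFin rfl) +
        cellExp (Fin.castLE (card_finset_fin_le A)) (Sum.inrₗ ∘ B.orderEmbOfFin h.symm) := by
  rw [gramSubst_minorM R h]
  exact monic_det_gram_and_degree (Sum.Lex.inl_strictMono.comp (A.orderEmbOfFin rfl).strictMono)
    (Sum.Lex.inr_strictMono.comp (B.orderEmbOfFin h.symm).strictMono) _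

lemma degree_gramSubst_minorM_inl {A : Finset (Fin m)} {B : Finset (Fin n)}
    (h : A.card = B.card) (k i : Fin m) :
    lex.degree (gramSubst m n R (minorM (genX m n R) A B)) (toLex (k, Sum.inlₗ i)) =
      if entry k A = some i then 1 else 0 := by
  have hinj : Function.Injective (Sum.inlₗ : Fin m → Fin m ⊕ₗ Fin n) :=
    Sum.Lex.inl_strictMono.injective
  rw [(monic_gramSubst_minorM_and_degree R h).2, Finsupp.add_apply,
    cellExp_castLE_orderEmbOfFin_apply _ _ hinj, cellExp_apply_eq_zero, add_zero]
  simp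

lemma degree_gramSubst_minorM_inr {A : Finset (Fin m)} {B : Finset (Fin n)}
    (h : A.card = B.card) (k : Fin m) (j : Fin n) :
    lex.degree (gramSubst m n R (minorM (genX m n R) A B)) (toLex (k, Sum.inrₗ j)) =
      if entry k B = some j then 1 else 0 := by
  have hinj : Function.Injective (Sum.inrₗ : Fin n → Fin m ⊕ₗ Fin n) :=
    Sum.Lex.inr_strictMono.injective
  rw [(monic_gramSubst_minorM_and_degree R h).2, Finsupp.add_apply,
    cellExp_castLE_orderEmbOfFin_apply _ _ hinj, cellExp_apply_eq_zero, zero_add]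
  simp

lemma monic_gramSubst_prod_minorM_and_degree {l : List (Finset (Fin m) × Finset (Fin n))}
    (hl : ∀ p ∈ l, p.1.card = p.2.card) :
    lex.Monic (gramSubst m n R (l.map fun p => minorM (genX m n R) p.1 p.2).prod) ∧
      lex.degree (gramSubst m n R (l.map fun p => minorM (genX m n R) p.1 p.2).prod) =
        (l.map fun p => lex.degree (gramSubst m n R (minorM (genX m n R) p.1 p.2))).sum := by
  have hprod : gramSubst m n R (l.map fun p => minorM (genX m n R) p.1 p.2).prod =
      (l.map fun p => gramSubst m n R (minorM (genX m n R) p.1 p.2)).prod := by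
    rw [map_list_prod, List.map_map, Function.comp_def]
  have hmonic : ∀ p ∈ l, lex.Monic (gramSubst m n R (minorM (genX m n R) p.1 p.2)) :=
    fun p hp => (monic_gramSubst_minorM_and_degree R (hl p hp)).1
  have h := monic_list_prod_and_degree (List.forall_mem_map.2 hmonic)
  rwa [List.map_map, Function.comp_def, ← hprod] at h

lemma degree_gramSubst_prod_minorM_apply {l : List (Finset (Fin m) × Finset (Fin n))}
    (hl : ∀ p ∈ l, p.1.card = p.2.card) (d : Fin m ×ₗ (Fin m ⊕ₗ Fin n)) :
    lex.degree (gramSubst m n R (l.map fun p => minorM (genX m n R) p.1 p.2).prod) d =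
      (l.map fun p => lex.degree (gramSubst m n R (minorM (genX m n R) p.1 p.2)) d).sum := by
  rw [(monic_gramSubst_prod_minorM_and_degree R hl).2, ← Finsupp.applyAddHom_apply, map_list_sum,
    List.map_map]
  rfl

lemma degree_gramSubst_prod_minorM_inl {l : List (Finset (Fin m) × Finset (Fin n))}
    (hl : ∀ p ∈ l, p.1.card = p.2.card) (k i : Fin m) :
    lex.degree (gramSubst m n R (l.map fun p => minorM (genX m n R) p.1 p.2).prod)
      (toLex (k, Sum.inlₗ i)) = ((l.map Prod.fst).map (entry k)).count (some i) := by
  rw [degree_gramSubst_prod_minorM_apply R hl, List.map_map, ← sum_map_ite_eq_count_map]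
  exact congrArg List.sum <| List.map_congr_left fun p hp =>
    degree_gramSubst_minorM_inl R (hl p hp) k i

lemma degree_gramSubst_prod_minorM_inr {l : List (Finset (Fin m) × Finset (Fin n))}
    (hl : ∀ p ∈ l, p.1.card = p.2.card) (k : Fin m) (j : Fin n) :
    lex.degree (gramSubst m n R (l.map fun p => minorM (genX m n R) p.1 p.2).prod)
      (toLex (k, Sum.inrₗ j)) = ((l.map Prod.snd).map (entry k)).count (some j) := by
  rw [degree_gramSubst_prod_minorM_apply R hl, List.map_map, ← sum_map_ite_eq_count_map]
  exact congrArg List.sum <| List.map_congr_left fun p hp =>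
    degree_gramSubst_minorM_inr R (hl p hp) k j

lemma degree_gramSubst_stdMon_injective :
    Function.Injective fun L : StdIdx m n => lex.degree (gramSubst m n R (stdMon m n R L)) := by
  rintro ⟨l, hl, hchain⟩ ⟨l', hl', hchain'⟩ h
  have hcard p hp := (hl p hp).1
  have hcard' p hp := (hl' p hp).1
  have hne p hp := nonempty_of_card_eq (hl p hp).1 (hl p hp).2
  have hne' p hp := nonempty_of_card_eq (hl' p hp).1 (hl' p hp).2
  have hfst : l.map Prod.fst = l'.map Prod.fst := by
    refine eq_of_count_entry_eq_of_card_le (N := m)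
      (List.forall_mem_map.2 fun p hp => ⟨(hne p hp).1, card_finset_fin_le _⟩)
      (List.forall_mem_map.2 fun p hp => ⟨(hne' p hp).1, card_finset_fin_le _⟩)
      (pairwise_domLE_map (hchain.imp fun _ _ => And.left))
      (pairwise_domLE_map (hchain'.imp fun _ _ => And.left)) fun k i => ?_
    rw [← degree_gramSubst_prod_minorM_inl R hcard, ← degree_gramSubst_prod_minorM_inl R hcard']
    exact DFunLike.congr_fun h _
  have hsnd : l.map Prod.snd = l'.map Prod.snd := by
    refine eq_of_count_entry_eq_of_card_le (N := m)
      (List.forall_mem_map.2 fun p hp => ⟨(hne p hp).2, hcard p hp ▸ card_finset_fin_le _⟩)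
      (List.forall_mem_map.2 fun p hp => ⟨(hne' p hp).2, hcard' p hp ▸ card_finset_fin_le _⟩)
      (pairwise_domLE_map (hchain.imp fun _ _ => And.right))
      (pairwise_domLE_map (hchain'.imp fun _ _ => And.right)) fun k j => ?_
    rw [← degree_gramSubst_prod_minorM_inr R hcard, ← degree_gramSubst_prod_minorM_inr R hcard']
    exact DFunLike.congr_fun h _
  refine Subtype.ext (?_ : l = l')
  rw [← List.zip_unzip l, ← List.zip_unzip l', List.unzip_eq_map, List.unzip_eq_map, hfst, hsnd]

variable (m n) in
lemma linearIndependent_stdMon : LinearIndependent R (stdMon m n R) := by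
  refine LinearIndependent.of_comp (gramSubst m n R).toLinearMap <|
    linearIndependent_of_injective_degree (ord := lex)
      (degree_gramSubst_stdMon_injective R) fun L => ?_
  have hmonic : lex.Monic (gramSubst m n R (stdMon m n R L)) :=
    (monic_gramSubst_prod_minorM_and_degree R fun p hp => (L.2.1 p hp).1).1
  exact hmonic.leadingCoeff_eq_one.symm ▸ one_mem (nonZeroDivisors R)

end Substitution
end StandardMonomial

/-- Theorem 4: for the generic matrix over a nonzero commutative ring, the standard
monomials in its minors are pairwise distinct and linearly independent. -/
theorem statement16 (m n : ℕ) (R : Type*) [CommRing R] [Nontrivial R] :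
    Function.Injective (stdMon m n R) ∧ LinearIndependent R (stdMon m n R) := by
  have h := StandardMonomial.linearIndependent_stdMon m n R
  exact ⟨h.injective, h⟩
end
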